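/- Let 𝒜 : ℝ^{n₁×n₂} → ℝ^m be a random linear operator represented by matrices A₁,…,A_m whose entries are i.i.d. standard Gaussian N(0,1) random variables, and let τ ∈ [1, n₁]. Then for every t > 0, Pr[ρ_τ^max(𝒜/√m) > 1 + 3√(τ n₂/m) + t] ≤ exp(−m t²/2) and Pr[ρ_τ^min(𝒜/√m) < 1 − 3√(τ n₂/m) − t] ≤ exp(−m t²/2). -/

import Mathlib

open scoped BigOperators

noncomputable section

/-- Frobenius norm of a real matrix. -/
def frobNorm {n₁ n₂ : ℕ} (X : Matrix (Fin n₁) (Fin n₂) ℝ) : ℝ :=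
  Real.sqrt (∑ i, ∑ j, (X i j) ^ 2)

/-- Singular values of a real matrix: square roots of eigenvalues of `X * Xᴴ`. -/
def singVals {n₁ n₂ : ℕ} (X : Matrix (Fin n₁) (Fin n₂) ℝ) : Fin n₁ → ℝ :=
  fun i => Real.sqrt ((Matrix.isHermitian_mul_conjTranspose_self X).eigenvalues i)

/-- Nuclear norm: sum of singular values. -/
def nuclearNorm {n₁ n₂ : ℕ} (X : Matrix (Fin n₁) (Fin n₂) ℝ) : ℝ :=
  ∑ i, singVals X i

/-- Operator norm: largest singular value. -/
def matOpNorm {n₁ n₂ : ℕ} (X : Matrix (Fin n₁) (Fin n₂) ℝ) : ℝ :=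
  ⨆ i, singVals X i

/-- ℓ*-rank. -/
def lstarRank {n₁ n₂ : ℕ} (X : Matrix (Fin n₁) (Fin n₂) ℝ) : ℝ :=
  nuclearNorm X ^ 2 / frobNorm X ^ 2

/-- Euclidean norm of a vector. -/
def vnorm {m : ℕ} (v : Fin m → ℝ) : ℝ :=
  Real.sqrt (∑ k, (v k) ^ 2)

/-- Matrix inner product. -/
def matInner {n₁ n₂ : ℕ} (X Y : Matrix (Fin n₁) (Fin n₂) ℝ) : ℝ :=
  (X.transpose * Y).trace

def cmsvMin {n₁ n₂ m : ℕ} (A : Matrix (Fin n₁) (Fin n₂) ℝ → (Fin m → ℝ)) (τ : ℝ) : ℝ :=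
  sInf {c | ∃ X : Matrix (Fin n₁) (Fin n₂) ℝ, X ≠ 0 ∧ lstarRank X ≤ τ ∧ c = vnorm (A X) / frobNorm X}

def cmsvMax {n₁ n₂ m : ℕ} (A : Matrix (Fin n₁) (Fin n₂) ℝ → (Fin m → ℝ)) (τ : ℝ) : ℝ :=
  sSup {c | ∃ X : Matrix (Fin n₁) (Fin n₂) ℝ, X ≠ 0 ∧ lstarRank X ≤ τ ∧ c = vnorm (A X) / frobNorm X}

def rcsvMin {n₁ n₂ m : ℕ} (A : Matrix (Fin n₁) (Fin n₂) ℝ → (Fin m → ℝ)) (r : ℕ) : ℝ :=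
  sInf {c | ∃ X : Matrix (Fin n₁) (Fin n₂) ℝ, X ≠ 0 ∧ X.rank ≤ r ∧ c = vnorm (A X) / frobNorm X}

def rcsvMax {n₁ n₂ m : ℕ} (A : Matrix (Fin n₁) (Fin n₂) ℝ → (Fin m → ℝ)) (r : ℕ) : ℝ :=
  sSup {c | ∃ X : Matrix (Fin n₁) (Fin n₂) ℝ, X ≠ 0 ∧ X.rank ≤ r ∧ c = vnorm (A X) / frobNorm X}

def mRIC {n₁ n₂ m : ℕ} (A : Matrix (Fin n₁) (Fin n₂) ℝ → (Fin m → ℝ)) (r : ℕ) : ℝ :=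
  sInf {δ : ℝ | 0 < δ ∧ ∀ X : Matrix (Fin n₁) (Fin n₂) ℝ, X ≠ 0 → X.rank ≤ r →
    1 - δ ≤ (vnorm (A X)) ^ 2 / (frobNorm X) ^ 2 ∧ (vnorm (A X)) ^ 2 / (frobNorm X) ^ 2 ≤ 1 + δ}

def opOf {n₁ n₂ m : ℕ} (A : Fin m → Matrix (Fin n₁) (Fin n₂) ℝ) :
    Matrix (Fin n₁) (Fin n₂) ℝ → (Fin m → ℝ) :=
  fun X k => matInner (A k) X


open MeasureTheory ProbabilityTheory

/-- The Gaussian ensemble: all entries of the `m` representing matrices are i.i.d. `N(0,1)`. -/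
def gaussianEnsemble (m n₁ n₂ : ℕ) : Measure ((Fin m × Fin n₁ × Fin n₂) → ℝ) :=
  Measure.pi fun _ => gaussianReal 0 1

/-- The collection of representing matrices determined by a sample `ω`. -/
def ensembleMatrices {m n₁ n₂ : ℕ} (ω : (Fin m × Fin n₁ × Fin n₂) → ℝ) :
    Fin m → Matrix (Fin n₁) (Fin n₂) ℝ :=
  fun k => Matrix.of fun i j => ω (k, i, j)

/-- The scaled operator `𝒜/√m` determined by a sample `ω`. -/
def scaledOp {m n₁ n₂ : ℕ} (ω : (Fin m × Fin n₁ × Fin n₂) → ℝ) :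
    Matrix (Fin n₁) (Fin n₂) ℝ → (Fin m → ℝ) :=
  fun X k => opOf (ensembleMatrices ω) X k / Real.sqrt m

/-- `f` grows at most exponentially in the norm. -/
def ExpGrowth {E : Type*} [NormedAddCommGroup E] (f : E → ℝ) : Prop :=
  ∃ C c : ℝ, 0 ≤ C ∧ 0 ≤ c ∧ ∀ z, |f z| ≤ C * Real.exp (c * ‖z‖)

namespace ExpGrowth

variable {E F : Type*} [NormedAddCommGroup E] [NormedAddCommGroup F]

lemma of_abs_le {f : E → ℝ} {C c : ℝ} (hC : 0 ≤ C) (hc : 0 ≤ c)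
    (h : ∀ z, |f z| ≤ C * Real.exp (c * ‖z‖)) : ExpGrowth f := ⟨C, c, hC, hc, h⟩

lemma of_bounded {f : E → ℝ} {C : ℝ} (h : ∀ z, |f z| ≤ C) : ExpGrowth f :=
  ⟨C, 0, (abs_nonneg _).trans (h 0), le_rfl, fun z => by simpa using h z⟩

lemma mono {f g : E → ℝ} (hg : ExpGrowth g) (h : ∀ z, |f z| ≤ |g z|) : ExpGrowth f := by
  obtain ⟨C, c, hC, hc, hb⟩ := hg
  exact ⟨C, c, hC, hc, fun z => (h z).trans (hb z)⟩

lemma add {f g : E → ℝ} (hf : ExpGrowth f) (hg : ExpGrowth g) :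
    ExpGrowth fun z => f z + g z := by
  obtain ⟨C, c, hC, hc, hb⟩ := hf
  obtain ⟨C', c', hC', hc', hb'⟩ := hg
  refine ⟨C + C', max c c', by positivity, le_max_of_le_left hc, fun z => ?_⟩
  calc |f z + g z| ≤ |f z| + |g z| := abs_add_le _ _
    _ ≤ C * Real.exp (c * ‖z‖) + C' * Real.exp (c' * ‖z‖) := add_le_add (hb z) (hb' z)
    _ ≤ C * Real.exp (max c c' * ‖z‖) + C' * Real.exp (max c c' * ‖z‖) := by
        gcongr
        · exact le_max_left _ _
        · exact le_max_right _ _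
    _ = _ := by ring

lemma mul {f g : E → ℝ} (hf : ExpGrowth f) (hg : ExpGrowth g) :
    ExpGrowth fun z => f z * g z := by
  obtain ⟨C, c, hC, hc, hb⟩ := hf
  obtain ⟨C', c', hC', hc', hb'⟩ := hg
  refine ⟨C * C', c + c', by positivity, by positivity, fun z => ?_⟩
  calc |f z * g z| = |f z| * |g z| := abs_mul _ _
    _ ≤ (C * Real.exp (c * ‖z‖)) * (C' * Real.exp (c' * ‖z‖)) :=
        mul_le_mul (hb z) (hb' z) (abs_nonneg _) (by positivity)
    _ = _ := by rw [add_mul, Real.exp_add]; ring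

lemma const (a : ℝ) : ExpGrowth fun _ : E => a := of_bounded fun _ => le_rfl

lemma const_mul {f : E → ℝ} (hf : ExpGrowth f) (a : ℝ) : ExpGrowth fun z => a * f z :=
  (const a).mul hf

lemma sum {ι : Type*} (s : Finset ι) {f : ι → E → ℝ} (hf : ∀ i, ExpGrowth (f i)) :
    ExpGrowth fun z => ∑ i ∈ s, f i z := by
  classical
  induction s using Finset.induction_on with
  | empty => simpa using const 0
  | insert a s ha ih => simpa [Finset.sum_insert ha] using (hf a).add ih

lemma of_linear {f : E → ℝ} {C : ℝ} (h : ∀ z, |f z| ≤ C * (1 + ‖z‖)) : ExpGrowth f := by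
  have hC : 0 ≤ C := by simpa using (abs_nonneg _).trans (h 0)
  refine ⟨C, 1, hC, zero_le_one, fun z => (h z).trans ?_⟩
  gcongr
  linarith [Real.add_one_le_exp (1 * ‖z‖)]

lemma exp_of_linear {f : E → ℝ} {C : ℝ} (h : ∀ z, |f z| ≤ C * (1 + ‖z‖)) (a : ℝ) :
    ExpGrowth fun z => Real.exp (a * f z) := by
  have hC : 0 ≤ C := by simpa using (abs_nonneg _).trans (h 0)
  refine ⟨Real.exp (|a| * C), |a| * C, by positivity, by positivity, fun z => ?_⟩
  rw [abs_of_pos (Real.exp_pos _), ← Real.exp_add]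
  gcongr
  calc a * f z ≤ |a * f z| := le_abs_self _
    _ = |a| * |f z| := abs_mul _ _
    _ ≤ |a| * (C * (1 + ‖z‖)) := by gcongr; exact h z
    _ = _ := by ring

lemma comp_of_norm_le {f : F → ℝ} (hf : ExpGrowth f) {T : E → F} {B : ℝ} (hB : 0 ≤ B)
    (hT : ∀ z, ‖T z‖ ≤ B * ‖z‖) : ExpGrowth fun z => f (T z) := by
  obtain ⟨C, c, hC, hc, hb⟩ := hf
  refine ⟨C, c * B, hC, by positivity, fun z => (hb _).trans ?_⟩
  rw [mul_assoc]
  gcongr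
  exact hT z

end ExpGrowth

/-- The standard Gaussian measure on `κ → ℝ`. -/
abbrev stdG (κ : Type*) [Fintype κ] : Measure (κ → ℝ) := Measure.pi fun _ => gaussianReal 0 1

section Integrability

variable {κ : Type*} [Fintype κ]

lemma integrable_exp_mul_abs_gaussian (c : ℝ) :
    Integrable (fun x : ℝ => Real.exp (c * |x|)) (gaussianReal 0 1) :=
  integrable_exp_mul_abs (X := fun x : ℝ => x) (integrable_exp_mul_gaussianReal c)
    (integrable_exp_mul_gaussianReal (-c))

lemma ExpGrowth.integrable {f : (κ → ℝ) → ℝ} (hf : ExpGrowth f) (hc : Continuous f) :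
    Integrable f (stdG κ) := by
  obtain ⟨C, c, hC, hc0, hb⟩ := hf
  have h1 : Integrable (fun g : κ → ℝ => ∏ k, Real.exp (c * |g k|)) (stdG κ) :=
    Integrable.fintype_prod (f := fun _ x => Real.exp (c * |x|))
      fun _ => integrable_exp_mul_abs_gaussian c
  refine (h1.const_mul C).mono' hc.aestronglyMeasurable (ae_of_all _ fun g => ?_)
  rw [Real.norm_eq_abs, ← Real.exp_sum, ← Finset.mul_sum]
  refine (hb g).trans ?_
  gcongr
  rw [pi_norm_le_iff_of_nonneg (Finset.sum_nonneg fun _ _ => abs_nonneg _)]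
  intro k
  exact Finset.single_le_sum (f := fun k => |g k|) (fun _ _ => abs_nonneg _) (Finset.mem_univ k)

lemma ExpGrowth.integrable_real {f : ℝ → ℝ} (hf : ExpGrowth f) (hc : Continuous f) :
    Integrable f (gaussianReal 0 1) := by
  obtain ⟨C, c, hC, hc0, hb⟩ := hf
  exact ((integrable_exp_mul_abs_gaussian c).const_mul C).mono' hc.aestronglyMeasurable
    (ae_of_all _ hb)

/-- Gaussian integration by parts on the line. -/
lemma integral_mul_gaussianReal {f f' : ℝ → ℝ} (hd : ∀ x, HasDerivAt f (f' x) x)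
    (hf : ExpGrowth f) (hf' : ExpGrowth f') (hc' : Continuous f') :
    ∫ x, x * f x ∂(gaussianReal 0 1) = ∫ x, f' x ∂(gaussianReal 0 1) := by
  have hc : Continuous f := continuous_iff_continuousAt.2 fun x => (hd x).continuousAt
  have hid : ExpGrowth (fun x : ℝ => x) :=
    ExpGrowth.of_linear (C := 1) fun z => by simp [Real.norm_eq_abs]
  have hvol : ∀ h : ℝ → ℝ, Integrable h (gaussianReal 0 1) →
      Integrable (fun x => h x * gaussianPDFReal 0 1 x) := by
    intro h hh
    rw [gaussianReal_of_var_ne_zero 0 one_ne_zero] at hh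
    have := (integrable_withDensity_iff (measurable_gaussianPDF 0 1)
      (ae_of_all _ fun x => gaussianPDF_lt_top)).1 hh
    simpa [toReal_gaussianPDF] using this
  have hpdf : ∀ x, HasDerivAt (gaussianPDFReal 0 1) (-x * gaussianPDFReal 0 1 x) x := by
    intro x
    have h := (((hasDerivAt_id x).pow 2).neg.div_const 2).exp.const_mul (Real.sqrt (2 * Real.pi))⁻¹
    rw [gaussianPDFReal_def]
    convert! h using 1
    · funext y; simp
    · simp; ring
  have key := integral_mul_deriv_eq_deriv_mul_of_integrable (u := f) (u' := f')
    (v := gaussianPDFReal 0 1) (v' := fun x => -x * gaussianPDFReal 0 1 x)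
    (fun x _ => hd x) (fun x _ => hpdf x) ?_
    (hvol _ (hf'.integrable_real hc')) (hvol _ (hf.integrable_real hc))
  · rw [integral_gaussianReal_eq_integral_smul one_ne_zero,
      integral_gaussianReal_eq_integral_smul one_ne_zero]
    simp only [smul_eq_mul]
    rw [← neg_inj, ← integral_neg]
    calc _ = ∫ x, f x * (-x * gaussianPDFReal 0 1 x) := by congr 1; funext x; ring
      _ = _ := key
      _ = _ := by congr 2; funext x; ring
  · have := hvol _ ((hid.mul hf).integrable_real (by fun_prop)).neg
    refine this.congr (ae_of_all _ fun x => ?_)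
    simp only [Pi.neg_apply, Pi.mul_apply]
    ring

variable [DecidableEq κ]

/-- Resampling one coordinate preserves the standard Gaussian measure. -/
lemma measurePreserving_update (k : κ) :
    MeasurePreserving (fun p : ℝ × (κ → ℝ) => Function.update p.2 k p.1)
      ((gaussianReal 0 1).prod (stdG κ)) (stdG κ) := by
  have hm : Measurable (fun p : ℝ × (κ → ℝ) => Function.update p.2 k p.1) := by
    refine measurable_pi_iff.2 fun i => ?_
    by_cases h : i = k
    · subst h; simpa using measurable_fst
    · simp only [Function.update_of_ne h]
      exact (measurable_pi_apply i).comp measurable_snd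
  refine ⟨hm, (Measure.pi_eq fun s hs => ?_).symm⟩
  rw [Measure.map_apply hm (MeasurableSet.univ_pi hs)]
  have : (fun p : ℝ × (κ → ℝ) => Function.update p.2 k p.1) ⁻¹' (Set.univ.pi s) =
      s k ×ˢ (Set.univ.pi (Function.update s k Set.univ)) := by
    ext ⟨x, g⟩
    simp only [Set.mem_preimage, Set.mem_pi, Set.mem_univ, true_implies, Set.mem_prod]
    constructor
    · intro h
      refine ⟨by simpa using h k, fun i => ?_⟩
      by_cases hi : i = k
      · subst hi; simp
      · simpa [hi] using h i
    · rintro ⟨h1, h2⟩ i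
      by_cases hi : i = k
      · subst hi; simpa using h1
      · simpa [hi] using h2 i
  rw [this, Measure.prod_prod, Measure.pi_pi, ← Finset.mul_prod_erase _ _ (Finset.mem_univ k),
    ← Finset.mul_prod_erase Finset.univ (fun i => gaussianReal 0 1 (s i)) (Finset.mem_univ k)]
  congr 1
  rw [Function.update_self, measure_univ, one_mul]
  refine Finset.prod_congr rfl fun i hi => ?_
  rw [Function.update_of_ne (Finset.ne_of_mem_erase hi)]

/-- Gaussian integration by parts in one coordinate. -/
lemma integral_coord_mul_stdG (k : κ) {f f' : (κ → ℝ) → ℝ}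
    (hd : ∀ g x, HasDerivAt (fun y => f (Function.update g k y)) (f' (Function.update g k x)) x)
    (hc : Continuous f) (hf : ExpGrowth f) (hf' : ExpGrowth f') (hc' : Continuous f') :
    ∫ g, g k * f g ∂(stdG κ) = ∫ g, f' g ∂(stdG κ) := by
  have hk : ExpGrowth (fun g : κ → ℝ => g k) :=
    ExpGrowth.of_linear (C := 1) fun z => by
      have := norm_le_pi_norm z k
      rw [Real.norm_eq_abs] at this
      linarith
  have hmp := measurePreserving_update k
  have hfub : ∀ h : (κ → ℝ) → ℝ, Continuous h → ExpGrowth h →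
      ∫ g, h g ∂(stdG κ) =
        ∫ g, ∫ x, h (Function.update g k x) ∂(gaussianReal 0 1) ∂(stdG κ) := by
    intro h hch hh
    have hi := hh.integrable hch
    have h1 : ∫ g, h g ∂(stdG κ) = ∫ p : ℝ × (κ → ℝ), h (Function.update p.2 k p.1)
        ∂((gaussianReal 0 1).prod (stdG κ)) := by
      conv_lhs => rw [← hmp.map_eq]
      rw [integral_map hmp.measurable.aemeasurable hch.aestronglyMeasurable]
    rw [h1]
    exact integral_prod_symm _ (hmp.integrable_comp_of_integrable hi)
  have hgrow : ∀ (h : (κ → ℝ) → ℝ) (g : κ → ℝ), ExpGrowth h →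
      ExpGrowth fun x : ℝ => h (Function.update g k x) := by
    rintro h g ⟨C, c, hC, hc, hb⟩
    refine ⟨C * Real.exp (c * ‖g‖), c, by positivity, hc, fun x => (hb _).trans ?_⟩
    rw [mul_assoc, ← Real.exp_add, ← mul_add]
    gcongr
    rw [pi_norm_le_iff_of_nonneg (by positivity)]
    intro i
    by_cases hi : i = k
    · subst hi; simp
    · rw [Function.update_of_ne hi]
      exact (norm_le_pi_norm g i).trans (by simp)
  rw [hfub _ (by fun_prop) (hk.mul hf), hfub _ hc' hf']
  refine integral_congr_ae (ae_of_all _ fun g => ?_)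
  simp only [Function.update_self]
  refine integral_mul_gaussianReal (hd g) (hgrow _ g hf) (hgrow _ g hf') ?_
  exact hc'.comp (continuous_const.update k continuous_id)

end Integrability

section Interpolation

variable {ι κ : Type*} [Fintype ι] [Fintype κ]

/-- `d` is the family of partial derivatives of the differentiable function `Φ`. -/
def HasGrad (Φ : (ι → ℝ) → ℝ) (d : ι → (ι → ℝ) → ℝ) : Prop :=
  ∀ z, HasFDerivAt Φ (∑ a, d a z • (ContinuousLinearMap.proj a : (ι → ℝ) →L[ℝ] ℝ)) z

lemma HasGrad.continuous {Φ : (ι → ℝ) → ℝ} {d : ι → (ι → ℝ) → ℝ} (h : HasGrad Φ d) :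
    Continuous Φ := continuous_iff_continuousAt.2 fun z => (h z).continuousAt

lemma HasGrad.hasDerivAt_comp {Φ : (ι → ℝ) → ℝ} {d : ι → (ι → ℝ) → ℝ} (h : HasGrad Φ d)
    {z : ℝ → ι → ℝ} {z' : ι → ℝ} {t : ℝ} (hz : ∀ a, HasDerivAt (fun s => z s a) (z' a) t) :
    HasDerivAt (fun s => Φ (z s)) (∑ a, d a (z t) * z' a) t := by
  have := (h (z t)).comp_hasDerivAt t (hasDerivAt_pi.2 hz)
  simpa [_root_.sum_apply, Function.comp_def] using this

/-- `Φ` is twice continuously differentiable with partial derivatives `d₁`, `d₂`, all of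
at most exponential growth. -/
structure GaussSmooth (Φ : (ι → ℝ) → ℝ) (d₁ : ι → (ι → ℝ) → ℝ)
    (d₂ : ι → ι → (ι → ℝ) → ℝ) : Prop where
  grad₁ : HasGrad Φ d₁
  grad₂ : ∀ a, HasGrad (d₁ a) (d₂ a)
  cont₂ : ∀ a b, Continuous (d₂ a b)
  growth₀ : ExpGrowth Φ
  growth₁ : ∀ a, ExpGrowth (d₁ a)
  growth₂ : ∀ a b, ExpGrowth (d₂ a b)

lemma norm_mulVec_le_of_abs_le {M N : Matrix ι κ ℝ} (h : ∀ a k, |M a k| ≤ N a k) (g : κ → ℝ) :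
    ‖M.mulVec g‖ ≤ (∑ a, ∑ k, N a k) * ‖g‖ := by
  have hN : ∀ a k, 0 ≤ N a k := fun a k => (abs_nonneg _).trans (h a k)
  have hs : ∀ a, 0 ≤ ∑ k, N a k := fun a => Finset.sum_nonneg fun k _ => hN a k
  rw [pi_norm_le_iff_of_nonneg (mul_nonneg (Finset.sum_nonneg fun a _ => hs a) (norm_nonneg _))]
  intro a
  calc ‖M.mulVec g a‖ ≤ ∑ k, ‖M a k * g k‖ := norm_sum_le _ _
    _ ≤ ∑ k, N a k * ‖g‖ := by
        refine Finset.sum_le_sum fun k _ => ?_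
        rw [norm_mul]
        exact mul_le_mul (h a k) (norm_le_pi_norm g k) (norm_nonneg _) (hN a k)
    _ = (∑ k, N a k) * ‖g‖ := by rw [Finset.sum_mul]
    _ ≤ _ := by
        gcongr
        exact Finset.single_le_sum (f := fun a => ∑ k, N a k) (fun a _ => hs a) (Finset.mem_univ a)

lemma ExpGrowth.comp_mulVec {f : (ι → ℝ) → ℝ} (hf : ExpGrowth f) (M : Matrix ι κ ℝ) :
    ExpGrowth fun g => f (M.mulVec g) :=
  hf.comp_of_norm_le (B := ∑ a, ∑ k, |M a k|)
    (Finset.sum_nonneg fun _ _ => Finset.sum_nonneg fun _ _ => abs_nonneg _)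
    (norm_mulVec_le_of_abs_le (N := fun a k => |M a k|) fun _ _ => le_rfl)

lemma continuous_mulVec_const {ι κ : Type*} [Fintype κ] (M : Matrix ι κ ℝ) : Continuous fun g : κ → ℝ => M.mulVec g :=
  Continuous.matrix_mulVec continuous_const continuous_id

lemma expGrowth_mulVec_apply (M : Matrix ι κ ℝ) (a : ι) :
    ExpGrowth fun g : κ → ℝ => M.mulVec g a :=
  (ExpGrowth.of_linear (f := fun z : ι → ℝ => z a) (C := 1) fun z => by
    have := norm_le_pi_norm z a
    rw [Real.norm_eq_abs] at this
    linarith).comp_mulVec M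

/-- The Gaussian integration by parts formula for a linear form against a function of a linear
image. -/
lemma integral_mulVec_mul {Φ : (ι → ℝ) → ℝ} {d : ι → (ι → ℝ) → ℝ} (h : HasGrad Φ d)
    (hΦ : ExpGrowth Φ) (hd : ∀ a, ExpGrowth (d a)) (hc : ∀ a, Continuous (d a))
    (M N : Matrix ι κ ℝ) (a : ι) :
    ∫ g, N.mulVec g a * Φ (M.mulVec g) ∂(stdG κ) =
      ∑ b, (N * M.transpose) a b * ∫ g, d b (M.mulVec g) ∂(stdG κ) := by
  classical
  have hM := continuous_mulVec_const M
  have hΦc := h.continuous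
  have hcoord : ∀ k : κ, ∫ g, g k * Φ (M.mulVec g) ∂(stdG κ) =
      ∑ b, M b k * ∫ g, d b (M.mulVec g) ∂(stdG κ) := by
    intro k
    rw [integral_coord_mul_stdG k (f' := fun g => ∑ b, d b (M.mulVec g) * M b k)]
    · rw [integral_finsetSum]
      · refine Finset.sum_congr rfl fun b _ => ?_
        rw [integral_mul_const, mul_comm]
      · intro b _
        exact (((hd b).comp_mulVec M).integrable ((hc b).comp hM)).mul_const _
    · intro g x
      refine h.hasDerivAt_comp (z := fun y => M.mulVec (Function.update g k y)) fun b => ?_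
      simp only [Matrix.mulVec, dotProduct]
      have : ∀ l ∈ Finset.univ, HasDerivAt (fun y => M b l * Function.update g k y l)
          (M b l * (Pi.single k (1 : ℝ) : κ → ℝ) l) x := by
        intro l _
        refine HasDerivAt.const_mul _ ?_
        exact hasDerivAt_pi.1 (hasDerivAt_update g k x) l
      convert! HasDerivAt.fun_sum this using 1
      simp [Pi.single_apply]
    · exact hΦc.comp hM
    · exact hΦ.comp_mulVec M
    · exact ExpGrowth.sum _ fun b => ((hd b).comp_mulVec M).mul (ExpGrowth.const _)
    · exact continuous_finsetSum _ fun b _ => ((hc b).comp hM).mul continuous_const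
  have hk : ∀ k, ExpGrowth (fun g : κ → ℝ => g k) := fun k =>
    ExpGrowth.of_linear (C := 1) fun z => by
      have := norm_le_pi_norm z k
      rw [Real.norm_eq_abs] at this
      linarith
  calc ∫ g, N.mulVec g a * Φ (M.mulVec g) ∂(stdG κ)
      = ∫ g, ∑ k, N a k * (g k * Φ (M.mulVec g)) ∂(stdG κ) := by
        congr 1; funext g
        simp only [Matrix.mulVec, dotProduct, Finset.sum_mul, mul_assoc]
    _ = ∑ k, N a k * ∫ g, g k * Φ (M.mulVec g) ∂(stdG κ) := by
        rw [integral_finsetSum]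
        · simp only [integral_const_mul]
        · intro k _
          exact (((hk k).mul (hΦ.comp_mulVec M)).integrable
            ((continuous_apply k).mul (hΦc.comp hM))).const_mul _
    _ = _ := by
        simp only [hcoord, Matrix.mul_apply, Matrix.transpose_apply, Finset.mul_sum,
          Finset.sum_mul]
        rw [Finset.sum_comm]
        simp only [mul_assoc]

/-- The rotation path between two linear maps. -/
def interp {ι κ : Type*} (P Q : Matrix ι κ ℝ) (θ : ℝ) : Matrix ι κ ℝ := Real.cos θ • P + Real.sin θ • Q

lemma abs_smul_add_smul_le {ι κ : Type*} (P Q : Matrix ι κ ℝ) {x y : ℝ} (hx : |x| ≤ 1) (hy : |y| ≤ 1)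
    (a : ι) (k : κ) : |(x • P + y • Q) a k| ≤ |P a k| + |Q a k| := by
  simp only [Matrix.add_apply, Matrix.smul_apply, smul_eq_mul]
  refine (abs_add_le _ _).trans ?_
  rw [abs_mul, abs_mul]
  exact add_le_add (mul_le_of_le_one_left (abs_nonneg _) hx)
    (mul_le_of_le_one_left (abs_nonneg _) hy)

/-- Derivative of a Gaussian expectation along the rotation path between two independent
Gaussian vectors. -/
theorem GaussSmooth.hasDerivAt_interp {Φ : (ι → ℝ) → ℝ} {d₁ : ι → (ι → ℝ) → ℝ}
    {d₂ : ι → ι → (ι → ℝ) → ℝ} (h : GaussSmooth Φ d₁ d₂) (P Q : Matrix ι κ ℝ)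
    (hPQ : P * Q.transpose = 0) (θ : ℝ) :
    HasDerivAt (fun t => ∫ g, Φ ((interp P Q t).mulVec g) ∂(stdG κ))
      (Real.sin θ * Real.cos θ * ∫ g, ∑ a, ∑ b,
        (Q * Q.transpose - P * P.transpose) a b * d₂ a b ((interp P Q θ).mulVec g) ∂(stdG κ)) θ := by
  set N : ℝ → Matrix ι κ ℝ := fun t => (-Real.sin t) • P + Real.cos t • Q with hN
  set B : ℝ := ∑ a, ∑ k, (|P a k| + |Q a k|) with hB
  have hB0 : 0 ≤ B := Finset.sum_nonneg fun _ _ => Finset.sum_nonneg fun _ _ => by positivity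
  have hbM : ∀ t g, ‖(interp P Q t).mulVec g‖ ≤ B * ‖g‖ := fun t =>
    norm_mulVec_le_of_abs_le (N := fun a k => |P a k| + |Q a k|)
      (abs_smul_add_smul_le P Q (Real.abs_cos_le_one t) (Real.abs_sin_le_one t))
  have hbN : ∀ t g, ‖(N t).mulVec g‖ ≤ B * ‖g‖ := fun t =>
    norm_mulVec_le_of_abs_le (N := fun a k => |P a k| + |Q a k|)
      (abs_smul_add_smul_le P Q (by rw [abs_neg]; exact Real.abs_sin_le_one t)
        (Real.abs_cos_le_one t))
  have hdiff : ∀ (g : κ → ℝ) (t : ℝ), HasDerivAt (fun t => Φ ((interp P Q t).mulVec g))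
      (∑ a, d₁ a ((interp P Q t).mulVec g) * (N t).mulVec g a) t := by
    intro g t
    refine h.grad₁.hasDerivAt_comp (z := fun t => (interp P Q t).mulVec g) fun a => ?_
    have := ((Real.hasDerivAt_cos t).mul_const (P.mulVec g a)).add
      ((Real.hasDerivAt_sin t).mul_const (Q.mulVec g a))
    convert! this using 1
    · funext s; simp [interp, Matrix.add_mulVec, Matrix.smul_mulVec]
    · simp [hN, Matrix.add_mulVec, Matrix.smul_mulVec, Matrix.neg_mulVec]
  choose C c hC hc hb using h.growth₁
  set bound : (κ → ℝ) → ℝ := fun g =>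
    ∑ a, (C a * Real.exp (c a * (B * ‖g‖))) * (B * ‖g‖) with hbound
  have hbound_int : Integrable bound (stdG κ) := by
    refine ExpGrowth.integrable (ExpGrowth.sum _ fun a => ?_) (by fun_prop)
    refine ExpGrowth.mul (ExpGrowth.of_abs_le (hC a) (mul_nonneg (hc a) hB0) fun z => ?_)
      (ExpGrowth.of_linear (C := B) fun z => ?_)
    · rw [abs_of_nonneg (mul_nonneg (hC a) (Real.exp_pos _).le), mul_assoc]
    · rw [abs_of_nonneg (by positivity)]
      nlinarith
  have hd₁c : ∀ a, Continuous (d₁ a) := fun a => (h.grad₂ a).continuous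
  have key := hasDerivAt_integral_of_dominated_loc_of_deriv_le (μ := stdG κ)
    (F := fun t g => Φ ((interp P Q t).mulVec g)) (bound := bound)
    (F' := fun t g => ∑ a, d₁ a ((interp P Q t).mulVec g) * (N t).mulVec g a)
    (s := Set.univ) (x₀ := θ) Filter.univ_mem
    (Filter.Eventually.of_forall fun t =>
      (h.grad₁.continuous.comp (continuous_mulVec_const _)).aestronglyMeasurable)
    ((h.growth₀.comp_mulVec _).integrable (h.grad₁.continuous.comp (continuous_mulVec_const _)))
    (continuous_finsetSum _ fun a _ => ((hd₁c a).comp (continuous_mulVec_const _)).mul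
      ((continuous_apply a).comp (continuous_mulVec_const _))).aestronglyMeasurable
    (ae_of_all _ fun g t _ => by
      refine (norm_sum_le _ _).trans (Finset.sum_le_sum fun a _ => ?_)
      rw [norm_mul]
      refine mul_le_mul ?_ ((norm_le_pi_norm _ a).trans (hbN t g)) (norm_nonneg _)
        (mul_nonneg (hC a) (Real.exp_pos _).le)
      refine (hb a _).trans ?_
      gcongr
      · exact hC a
      · exact hc a
      · exact hbM t g)
    hbound_int (ae_of_all _ fun g t _ => hdiff g t)
  convert! key.2 using 1
  have hNM : N θ * (interp P Q θ).transpose =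
      (Real.sin θ * Real.cos θ) • (Q * Q.transpose - P * P.transpose) := by
    have hQP : Q * P.transpose = 0 := by
      have := congrArg Matrix.transpose hPQ
      simpa [Matrix.transpose_mul] using this
    simp only [hN, interp, Matrix.transpose_add, Matrix.transpose_smul, Matrix.add_mul,
      Matrix.mul_add, Matrix.smul_mul, Matrix.mul_smul, hPQ, hQP, smul_zero, smul_sub]
    ext a b
    simp only [Matrix.add_apply, Matrix.smul_apply, Matrix.zero_apply, Matrix.sub_apply, smul_eq_mul]
    ring
  rw [integral_finsetSum, integral_finsetSum, Finset.mul_sum]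
  · refine Finset.sum_congr rfl fun a _ => ?_
    rw [integral_finsetSum]
    · have := integral_mulVec_mul (h.grad₂ a) (h.growth₁ a) (h.growth₂ a) (h.cont₂ a)
        (interp P Q θ) (N θ) a
      simp only [mul_comm (d₁ a _)]
      rw [this, Finset.mul_sum]
      refine Finset.sum_congr rfl fun b _ => ?_
      rw [hNM, integral_const_mul, Matrix.smul_apply, smul_eq_mul]
      ring
    · intro b _
      exact (((h.growth₂ a b).comp_mulVec _).integrable
        ((h.cont₂ a b).comp (continuous_mulVec_const _))).const_mul _
  · intro a _
    exact (((h.growth₁ a).comp_mulVec _).mul (expGrowth_mulVec_apply _ a)).integrable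
      (((hd₁c a).comp (continuous_mulVec_const _)).mul
        ((continuous_apply a).comp (continuous_mulVec_const _)))
  · intro a _
    exact integrable_finsetSum _ fun b _ => (((h.growth₂ a b).comp_mulVec _).integrable
      ((h.cont₂ a b).comp (continuous_mulVec_const _))).const_mul _

lemma interp_zero {ι κ : Type*} (P Q : Matrix ι κ ℝ) : interp P Q 0 = P := by simp [interp]

lemma interp_pi_div_two {ι κ : Type*} (P Q : Matrix ι κ ℝ) : interp P Q (Real.pi / 2) = Q := by simp [interp]

/-- A Gaussian comparison inequality: a bound on the covariance-weighted second derivatives,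
with expectation `K` along the path, bounds the difference of the expectations. -/
theorem GaussSmooth.integral_sub_le {Φ : (ι → ℝ) → ℝ} {d₁ : ι → (ι → ℝ) → ℝ}
    {d₂ : ι → ι → (ι → ℝ) → ℝ} (h : GaussSmooth Φ d₁ d₂) (P Q : Matrix ι κ ℝ)
    (hPQ : P * Q.transpose = 0) {Ψ : (ι → ℝ) → ℝ} (hΨ : ExpGrowth Ψ) (hΨc : Continuous Ψ) {K : ℝ}
    (hK : ∀ θ, ∫ g, Ψ ((interp P Q θ).mulVec g) ∂(stdG κ) = K)
    (hle : ∀ z, ∑ a, ∑ b, (Q * Q.transpose - P * P.transpose) a b * d₂ a b z ≤ Ψ z) :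
    ∫ g, Φ (Q.mulVec g) ∂(stdG κ) ≤ ∫ g, Φ (P.mulVec g) ∂(stdG κ) + K / 2 := by
  have hder := fun θ => (h.hasDerivAt_interp P Q hPQ θ).sub
    (((Real.hasDerivAt_sin θ).pow 2).const_mul (K / 2))
  have hanti : AntitoneOn (fun θ => (∫ g, Φ ((interp P Q θ).mulVec g) ∂(stdG κ)) -
      K / 2 * Real.sin θ ^ 2) (Set.Icc 0 (Real.pi / 2)) := by
    refine antitoneOn_of_hasDerivWithinAt_nonpos (convex_Icc _ _)
      (fun θ _ => (hder θ).continuousAt.continuousWithinAt)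
      (fun θ _ => (hder θ).hasDerivWithinAt) fun θ hθ => ?_
    rw [interior_Icc] at hθ
    have h1 : ∫ g, ∑ a, ∑ b, (Q * Q.transpose - P * P.transpose) a b *
        d₂ a b ((interp P Q θ).mulVec g) ∂(stdG κ) ≤ K := by
      rw [← hK θ]
      refine integral_mono ?_ ((hΨ.comp_mulVec _).integrable
        (hΨc.comp (continuous_mulVec_const _))) fun g => hle _
      exact integrable_finsetSum _ fun a _ => integrable_finsetSum _ fun b _ =>
        (((h.growth₂ a b).comp_mulVec _).integrable
          ((h.cont₂ a b).comp (continuous_mulVec_const _))).const_mul _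
    have hs : 0 ≤ Real.sin θ := Real.sin_nonneg_of_nonneg_of_le_pi hθ.1.le
      (by linarith [hθ.2, Real.pi_pos])
    have hcos : 0 ≤ Real.cos θ := Real.cos_nonneg_of_neg_pi_div_two_le_of_le
      (by linarith [hθ.1, Real.pi_pos]) hθ.2.le
    have := mul_le_mul_of_nonneg_left h1 (mul_nonneg hs hcos)
    rw [sub_nonpos]
    refine this.trans (le_of_eq ?_)
    norm_num
    ring
  have hpi : (0 : ℝ) ≤ Real.pi / 2 := by positivity
  have := hanti (Set.left_mem_Icc.2 hpi) (Set.right_mem_Icc.2 hpi) hpi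
  simp only [interp_zero, interp_pi_div_two, Real.sin_zero, Real.sin_pi_div_two] at this
  linarith

/-- If the covariance-weighted second derivatives vanish, the expectation is constant along the
path. -/
theorem GaussSmooth.integral_interp_eq {Φ : (ι → ℝ) → ℝ} {d₁ : ι → (ι → ℝ) → ℝ}
    {d₂ : ι → ι → (ι → ℝ) → ℝ} (h : GaussSmooth Φ d₁ d₂) (P Q : Matrix ι κ ℝ)
    (hPQ : P * Q.transpose = 0)
    (hzero : ∀ z, ∑ a, ∑ b, (Q * Q.transpose - P * P.transpose) a b * d₂ a b z = 0) (θ : ℝ) :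
    ∫ g, Φ ((interp P Q θ).mulVec g) ∂(stdG κ) = ∫ g, Φ (P.mulVec g) ∂(stdG κ) := by
  have hder : ∀ θ, HasDerivAt (fun t => ∫ g, Φ ((interp P Q t).mulVec g) ∂(stdG κ)) 0 θ := by
    intro θ
    have := h.hasDerivAt_interp P Q hPQ θ
    simpa only [hzero, integral_zero, mul_zero] using this
  have := is_const_of_deriv_eq_zero (fun θ => (hder θ).differentiableAt)
    (fun θ => (hder θ).deriv) θ 0
  simpa only [interp_zero] using this

end Interpolation

section Marginals

variable {κ κ' : Type*} [Fintype κ] [Fintype κ']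

/-- A subfamily of standard Gaussian coordinates is standard Gaussian. -/
lemma map_comp_stdG {e : κ → κ'} (he : Function.Injective e) :
    (stdG κ').map (fun g => fun k => g (e k)) = stdG κ := by
  have hi : iIndepFun (fun (k : κ') (g : κ' → ℝ) => g k) (stdG κ') :=
    iIndepFun_pi (X := fun _ x => x) fun _ => aemeasurable_id
  have h1 := (iIndepFun_iff_map_fun_eq_pi_map
    (fun k => (measurable_pi_apply (e k)).aemeasurable)).1 (hi.precomp he)
  rw [h1]
  congr 1
  funext k
  exact (measurePreserving_eval (fun _ : κ' => gaussianReal 0 1) (e k)).map_eq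

lemma integral_comp_stdG {e : κ → κ'} (he : Function.Injective e) {f : (κ → ℝ) → ℝ}
    (hf : Continuous f) :
    ∫ g, f (fun k => g (e k)) ∂(stdG κ') = ∫ g, f g ∂(stdG κ) := by
  rw [← map_comp_stdG he, integral_map
    (measurable_pi_lambda _ fun k => measurable_pi_apply (e k)).aemeasurable hf.aestronglyMeasurable]

/-- Disjoint blocks of Gaussian coordinates are independent. -/
lemma integral_mul_sum_stdG (f : (κ → ℝ) → ℝ) (h : (κ' → ℝ) → ℝ) :
    ∫ g, f (fun k => g (Sum.inl k)) * h (fun k => g (Sum.inr k)) ∂(stdG (κ ⊕ κ')) =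
      (∫ g, f g ∂(stdG κ)) * ∫ g, h g ∂(stdG κ') := by
  have hmp := measurePreserving_sumPiEquivProdPi (fun _ : κ ⊕ κ' => gaussianReal 0 1)
  rw [← integral_prod_mul, ← hmp.integral_comp (MeasurableEquiv.measurableEmbedding _)]
  rfl

end Marginals

section SmoothCalculus

variable {ι ι' : Type*} [Fintype ι] [Fintype ι']

lemma HasGrad.mul {f h : (ι → ℝ) → ℝ} {d e : ι → (ι → ℝ) → ℝ} (hf : HasGrad f d)
    (hh : HasGrad h e) :
    HasGrad (fun z => f z * h z) (fun a z => d a z * h z + f z * e a z) := by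
  intro z
  convert! (hf z).mul (hh z) using 1
  simp only [Finset.smul_sum, ← Finset.sum_add_distrib, smul_smul, ← add_smul]
  exact Finset.sum_congr rfl fun a _ => by congr 1; ring

lemma HasGrad.add {f h : (ι → ℝ) → ℝ} {d e : ι → (ι → ℝ) → ℝ} (hf : HasGrad f d)
    (hh : HasGrad h e) : HasGrad (fun z => f z + h z) (fun a z => d a z + e a z) := by
  intro z
  convert! (hf z).add (hh z) using 1
  simp only [← Finset.sum_add_distrib, ← add_smul]

lemma HasGrad.const_mul {f : (ι → ℝ) → ℝ} {d : ι → (ι → ℝ) → ℝ} (hf : HasGrad f d) (c : ℝ) :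
    HasGrad (fun z => c * f z) (fun a z => c * d a z) := by
  intro z
  convert! (hf z).const_mul c using 1
  simp only [Finset.smul_sum, smul_smul]

lemma HasGrad.exp {f : (ι → ℝ) → ℝ} {d : ι → (ι → ℝ) → ℝ} (hf : HasGrad f d) :
    HasGrad (fun z => Real.exp (f z)) (fun a z => Real.exp (f z) * d a z) := by
  intro z
  convert! (hf z).exp using 1
  simp only [Finset.smul_sum, smul_smul]

lemma HasGrad.congr {f : (ι → ℝ) → ℝ} {d e : ι → (ι → ℝ) → ℝ} (hf : HasGrad f d)
    (h : ∀ a z, d a z = e a z) : HasGrad f e := by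
  intro z
  simpa only [h] using hf z

/-- Extension by zero of partial derivatives under a coordinate embedding. -/
lemma HasGrad.comp_inl {f : (ι → ℝ) → ℝ} {d : ι → (ι → ℝ) → ℝ} (hf : HasGrad f d) :
    HasGrad (fun z : ι ⊕ ι' → ℝ => f fun a => z (Sum.inl a))
      (Sum.elim (fun a z => d a fun b => z (Sum.inl b)) fun _ _ => 0) := by
  intro z
  have h1 : HasFDerivAt (fun z : ι ⊕ ι' → ℝ => fun a => z (Sum.inl a))
      (ContinuousLinearMap.pi fun a : ι =>
        (ContinuousLinearMap.proj (Sum.inl a) : (ι ⊕ ι' → ℝ) →L[ℝ] ℝ)) z :=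
    hasFDerivAt_pi.2 fun a => hasFDerivAt_apply _ z
  convert! (hf _).comp z h1 using 1
  ext w
  simp [_root_.sum_apply]

lemma HasGrad.comp_inr {f : (ι → ℝ) → ℝ} {d : ι → (ι → ℝ) → ℝ} (hf : HasGrad f d) :
    HasGrad (fun z : ι' ⊕ ι → ℝ => f fun a => z (Sum.inr a))
      (Sum.elim (fun _ _ => 0) fun a z => d a fun b => z (Sum.inr b)) := by
  intro z
  have h1 : HasFDerivAt (fun z : ι' ⊕ ι → ℝ => fun a => z (Sum.inr a))
      (ContinuousLinearMap.pi fun a : ι =>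
        (ContinuousLinearMap.proj (Sum.inr a) : (ι' ⊕ ι → ℝ) →L[ℝ] ℝ)) z :=
    hasFDerivAt_pi.2 fun a => hasFDerivAt_apply _ z
  convert! (hf _).comp z h1 using 1
  ext w
  simp [_root_.sum_apply]

lemma hasGrad_zero : HasGrad (fun _ : ι → ℝ => (0 : ℝ)) fun _ _ => 0 := by
  intro z
  simpa using hasFDerivAt_const (0 : ℝ) z

lemma norm_comp_le (e : ι → ι') (z : ι' → ℝ) : ‖fun a => z (e a)‖ ≤ 1 * ‖z‖ := by
  rw [one_mul, pi_norm_le_iff_of_nonneg (norm_nonneg _)]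
  exact fun a => norm_le_pi_norm z (e a)

lemma ExpGrowth.comp_coord {f : (ι → ℝ) → ℝ} (hf : ExpGrowth f) (e : ι → ι') :
    ExpGrowth fun z : ι' → ℝ => f fun a => z (e a) :=
  hf.comp_of_norm_le zero_le_one (norm_comp_le e)

lemma GaussSmooth.mul {f h : (ι → ℝ) → ℝ} {d₁ e₁ : ι → (ι → ℝ) → ℝ}
    {d₂ e₂ : ι → ι → (ι → ℝ) → ℝ} (hf : GaussSmooth f d₁ d₂) (hh : GaussSmooth h e₁ e₂) :
    GaussSmooth (fun z => f z * h z) (fun a z => d₁ a z * h z + f z * e₁ a z)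
      (fun a b z => d₂ a b z * h z + d₁ a z * e₁ b z + (d₁ b z * e₁ a z + f z * e₂ a b z)) where
  grad₁ := hf.grad₁.mul hh.grad₁
  grad₂ a := ((hf.grad₂ a).mul hh.grad₁).add (hf.grad₁.mul (hh.grad₂ a))
  cont₂ a b := by
    have h1 := hf.cont₂ a b
    have h2 := hh.cont₂ a b
    have h3 := hf.grad₁.continuous
    have h4 := hh.grad₁.continuous
    have h5 := fun a => (hf.grad₂ a).continuous
    have h6 := fun a => (hh.grad₂ a).continuous
    fun_prop
  growth₀ := hf.growth₀.mul hh.growth₀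
  growth₁ a := ((hf.growth₁ a).mul hh.growth₀).add (hf.growth₀.mul (hh.growth₁ a))
  growth₂ a b := (((hf.growth₂ a b).mul hh.growth₀).add ((hf.growth₁ a).mul (hh.growth₁ b))).add
    (((hf.growth₁ b).mul (hh.growth₁ a)).add (hf.growth₀.mul (hh.growth₂ a b)))

lemma GaussSmooth.comp_inl {f : (ι → ℝ) → ℝ} {d₁ : ι → (ι → ℝ) → ℝ}
    {d₂ : ι → ι → (ι → ℝ) → ℝ} (hf : GaussSmooth f d₁ d₂) :
    GaussSmooth (fun z : ι ⊕ ι' → ℝ => f fun a => z (Sum.inl a))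
      (Sum.elim (fun a z => d₁ a fun b => z (Sum.inl b)) fun _ _ => 0)
      (Sum.elim (fun a => Sum.elim (fun b z => d₂ a b fun c => z (Sum.inl c)) fun _ _ => 0)
        fun _ _ _ => 0) where
  grad₁ := hf.grad₁.comp_inl
  grad₂ := by
    rintro (a | a)
    · exact (hf.grad₂ a).comp_inl
    · exact hasGrad_zero
  cont₂ := by
    rintro (a | a) (b | b)
    · exact (hf.cont₂ a b).comp (by fun_prop)
    all_goals exact continuous_const
  growth₀ := hf.growth₀.comp_coord _
  growth₁ := by
    rintro (a | a)
    · exact (hf.growth₁ a).comp_coord _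
    · exact ExpGrowth.const 0
  growth₂ := by
    rintro (a | a) (b | b)
    · exact (hf.growth₂ a b).comp_coord _
    all_goals exact ExpGrowth.const 0

lemma GaussSmooth.comp_inr {f : (ι → ℝ) → ℝ} {d₁ : ι → (ι → ℝ) → ℝ}
    {d₂ : ι → ι → (ι → ℝ) → ℝ} (hf : GaussSmooth f d₁ d₂) :
    GaussSmooth (fun z : ι' ⊕ ι → ℝ => f fun a => z (Sum.inr a))
      (Sum.elim (fun _ _ => 0) fun a z => d₁ a fun b => z (Sum.inr b))
      (Sum.elim (fun _ _ _ => 0)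
        fun a => Sum.elim (fun _ _ => 0) fun b z => d₂ a b fun c => z (Sum.inr c)) where
  grad₁ := hf.grad₁.comp_inr
  grad₂ := by
    rintro (a | a)
    · exact hasGrad_zero
    · exact (hf.grad₂ a).comp_inr
  cont₂ := by
    rintro (a | a) (b | b)
    · exact continuous_const
    · exact continuous_const
    · exact continuous_const
    · exact (hf.cont₂ a b).comp (by fun_prop)
  growth₀ := hf.growth₀.comp_coord _
  growth₁ := by
    rintro (a | a)
    · exact ExpGrowth.const 0
    · exact (hf.growth₁ a).comp_coord _
  growth₂ := by
    rintro (a | a) (b | b)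
    · exact ExpGrowth.const 0
    · exact ExpGrowth.const 0
    · exact ExpGrowth.const 0
    · exact (hf.growth₂ a b).comp_coord _

lemma GaussSmooth.exp {f : (ι → ℝ) → ℝ} {d₁ : ι → (ι → ℝ) → ℝ}
    {d₂ : ι → ι → (ι → ℝ) → ℝ} (hf : GaussSmooth f d₁ d₂) {C : ℝ}
    (hC : ∀ z, |f z| ≤ C * (1 + ‖z‖)) (c : ℝ) :
    GaussSmooth (fun z => Real.exp (c * f z)) (fun a z => Real.exp (c * f z) * (c * d₁ a z))
      (fun a b z => Real.exp (c * f z) * (c * d₁ b z) * (c * d₁ a z) +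
        Real.exp (c * f z) * (c * d₂ a b z)) where
  grad₁ := (hf.grad₁.const_mul c).exp
  grad₂ a := (hf.grad₁.const_mul c).exp.mul ((hf.grad₂ a).const_mul c)
  cont₂ a b := by
    have h1 := hf.cont₂ a b
    have h3 := hf.grad₁.continuous
    have h5 := fun a => (hf.grad₂ a).continuous
    fun_prop
  growth₀ := ExpGrowth.exp_of_linear hC c
  growth₁ a := (ExpGrowth.exp_of_linear hC c).mul ((hf.growth₁ a).const_mul c)
  growth₂ a b := (((ExpGrowth.exp_of_linear hC c).mul ((hf.growth₁ b).const_mul c)).mul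
    ((hf.growth₁ a).const_mul c)).add
      ((ExpGrowth.exp_of_linear hC c).mul ((hf.growth₂ a b).const_mul c))

end SmoothCalculus

section Concentration

variable {ι κ : Type*} [Fintype ι] [Fintype κ]

/-- A covariance inequality for `f` and `exp (c * f)` under a Gaussian law. -/
theorem GaussSmooth.integral_mul_exp_le {f : (ι → ℝ) → ℝ} {d₁ : ι → (ι → ℝ) → ℝ}
    {d₂ : ι → ι → (ι → ℝ) → ℝ} (hf : GaussSmooth f d₁ d₂) {C : ℝ}
    (hC : ∀ z, |f z| ≤ C * (1 + ‖z‖)) (W : Matrix ι κ ℝ)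
    (hW : ∀ z z', ∑ a, ∑ b, (W * W.transpose) a b * (d₁ a z * d₁ b z') ≤ 1)
    {c : ℝ} (hc : 0 ≤ c) :
    ∫ g, f (W.mulVec g) * Real.exp (c * f (W.mulVec g)) ∂(stdG κ) ≤
      ((∫ g, f (W.mulVec g) ∂(stdG κ)) + c) * ∫ g, Real.exp (c * f (W.mulVec g)) ∂(stdG κ) := by
  have hfc := hf.grad₁.continuous
  have hWc := continuous_mulVec_const W
  have hexp := hf.exp hC c
  set P : Matrix (ι ⊕ ι) ((κ ⊕ κ) ⊕ κ) ℝ := Matrix.fromCols (Matrix.fromBlocks W 0 0 W) 0 with hP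
  set Q : Matrix (ι ⊕ ι) ((κ ⊕ κ) ⊕ κ) ℝ := Matrix.fromCols 0 (Matrix.fromRows W W) with hQ
  have hPQ : P * Q.transpose = 0 := by
    simp [hP, hQ, Matrix.transpose_fromCols, Matrix.fromCols_mul_fromRows]
  have hD : Q * Q.transpose - P * P.transpose =
      Matrix.fromBlocks 0 (W * W.transpose) (W * W.transpose) 0 := by
    simp [hP, hQ, Matrix.transpose_fromCols, Matrix.fromCols_mul_fromRows,
      Matrix.transpose_fromRows, Matrix.fromBlocks_transpose, Matrix.fromBlocks_multiply]
    ext (a | a) (b | b) <;> simp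
  have hPl : ∀ (g : (κ ⊕ κ) ⊕ κ → ℝ), (fun a => P.mulVec g (Sum.inl a)) =
      W.mulVec fun k => g (Sum.inl (Sum.inl k)) := by
    intro g; funext a
    simp [hP, Matrix.fromCols_mulVec, Matrix.fromBlocks_mulVec, Function.comp_def]
  have hPr : ∀ (g : (κ ⊕ κ) ⊕ κ → ℝ), (fun a => P.mulVec g (Sum.inr a)) =
      W.mulVec fun k => g (Sum.inl (Sum.inr k)) := by
    intro g; funext a
    simp [hP, Matrix.fromCols_mulVec, Matrix.fromBlocks_mulVec, Function.comp_def]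
  have hQl : ∀ (g : (κ ⊕ κ) ⊕ κ → ℝ), (fun a => Q.mulVec g (Sum.inl a)) =
      W.mulVec fun k => g (Sum.inr k) := by
    intro g; funext a
    simp [hQ, Matrix.fromCols_mulVec, Matrix.fromRows_mulVec, Function.comp_def]
  have hQr : ∀ (g : (κ ⊕ κ) ⊕ κ → ℝ), (fun a => Q.mulVec g (Sum.inr a)) =
      W.mulVec fun k => g (Sum.inr k) := by
    intro g; funext a
    simp [hQ, Matrix.fromCols_mulVec, Matrix.fromRows_mulVec, Function.comp_def]
  set M : ℝ := ∫ g, Real.exp (c * f (W.mulVec g)) ∂(stdG κ) with hM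
  have hconst : ∀ θ, ∫ g, (2 * c) * Real.exp (c * f fun a => (interp P Q θ).mulVec g (Sum.inr a))
      ∂(stdG ((κ ⊕ κ) ⊕ κ)) = 2 * c * M := by
    intro θ
    rw [integral_const_mul]
    congr 1
    rw [(hexp.comp_inr (ι' := ι)).integral_interp_eq P Q hPQ (by
      intro z
      rw [hD]
      simp [Fintype.sum_sum_type]) θ]
    simp only [hPr]
    exact integral_comp_stdG (e := fun k : κ => (Sum.inl (Sum.inr k) : (κ ⊕ κ) ⊕ κ))
      (f := fun g => Real.exp (c * f (W.mulVec g)))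
      (fun x y h => by simpa using h) (by fun_prop)
  have key := ((hf.comp_inl (ι' := ι)).mul (hexp.comp_inr (ι' := ι))).integral_sub_le P Q hPQ
    (Ψ := fun z => (2 * c) * Real.exp (c * f fun a => z (Sum.inr a)))
    ((hexp.growth₀.comp_coord _).const_mul _) (by fun_prop) hconst (by
      intro z
      rw [hD]
      simp only [Fintype.sum_sum_type, Matrix.fromBlocks_apply₁₁, Matrix.fromBlocks_apply₁₂,
        Matrix.fromBlocks_apply₂₁, Matrix.fromBlocks_apply₂₂, Matrix.zero_apply, Sum.elim_inl,
        Sum.elim_inr, zero_mul, mul_zero, add_zero, zero_add, Finset.sum_const_zero]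
      set z₁ : ι → ℝ := fun a => z (Sum.inl a)
      set z₂ : ι → ℝ := fun a => z (Sum.inr a)
      have h1 : ∑ a, ∑ b, (W * W.transpose) a b *
          (d₁ a z₁ * (Real.exp (c * f z₂) * (c * d₁ b z₂))) =
          c * Real.exp (c * f z₂) * ∑ a, ∑ b, (W * W.transpose) a b * (d₁ a z₁ * d₁ b z₂) := by
        simp only [Finset.mul_sum]
        exact Finset.sum_congr rfl fun a _ => Finset.sum_congr rfl fun b _ => by ring
      have h2 : ∑ a, ∑ b, (W * W.transpose) a b *
          (d₁ b z₁ * (Real.exp (c * f z₂) * (c * d₁ a z₂))) =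
          c * Real.exp (c * f z₂) * ∑ a, ∑ b, (W * W.transpose) a b * (d₁ a z₂ * d₁ b z₁) := by
        simp only [Finset.mul_sum]
        exact Finset.sum_congr rfl fun a _ => Finset.sum_congr rfl fun b _ => by ring
      rw [Finset.sum_add_distrib.symm.trans (Finset.sum_add_distrib), h1, h2]
      have h0 : 0 ≤ c * Real.exp (c * f z₂) := by positivity
      nlinarith [mul_le_mul_of_nonneg_left (hW z₁ z₂) h0, mul_le_mul_of_nonneg_left (hW z₂ z₁) h0])
  simp only [hQl, hQr, hPl, hPr] at key
  have e1 := integral_comp_stdG (e := fun k : κ => (Sum.inr k : (κ ⊕ κ) ⊕ κ))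
      (f := fun g => f (W.mulVec g) * Real.exp (c * f (W.mulVec g)))
      Sum.inr_injective (by fun_prop)
  have e2 := integral_comp_stdG (e := fun k : κ ⊕ κ => (Sum.inl k : (κ ⊕ κ) ⊕ κ))
      (f := fun g => f (W.mulVec fun k => g (Sum.inl k)) *
        Real.exp (c * f (W.mulVec fun k => g (Sum.inr k))))
      Sum.inl_injective (by
        have h1 : Continuous fun g : κ ⊕ κ → ℝ => W.mulVec fun k => g (Sum.inl k) :=
          hWc.comp (by fun_prop)
        have h2 : Continuous fun g : κ ⊕ κ → ℝ => W.mulVec fun k => g (Sum.inr k) :=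
          hWc.comp (by fun_prop)
        fun_prop)
  have e3 := integral_mul_sum_stdG (fun g : κ → ℝ => f (W.mulVec g))
    (fun g : κ → ℝ => Real.exp (c * f (W.mulVec g)))
  rw [e1, e2, e3] at key
  linarith

/-- Gaussian concentration above the mean, with the sharp constant. -/
theorem GaussSmooth.measure_ge_le {f : (ι → ℝ) → ℝ} {d₁ : ι → (ι → ℝ) → ℝ}
    {d₂ : ι → ι → (ι → ℝ) → ℝ} (hf : GaussSmooth f d₁ d₂) {C : ℝ}
    (hC : ∀ z, |f z| ≤ C * (1 + ‖z‖)) (W : Matrix ι κ ℝ)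
    (hW : ∀ z z', ∑ a, ∑ b, (W * W.transpose) a b * (d₁ a z * d₁ b z') ≤ 1)
    {r : ℝ} (hr : 0 ≤ r) :
    (stdG κ) {g | (∫ g, f (W.mulVec g) ∂(stdG κ)) + r ≤ f (W.mulVec g)} ≤
      ENNReal.ofReal (Real.exp (-r ^ 2 / 2)) := by
  set X : (κ → ℝ) → ℝ := fun g => f (W.mulVec g) with hX
  set m : ℝ := ∫ g, X g ∂(stdG κ) with hm
  have hWc := continuous_mulVec_const W
  have h_integ : ∀ c : ℝ, Integrable (fun g => Real.exp (c * X g)) (stdG κ) := fun c =>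
    ((hf.exp hC c).growth₀.comp_mulVec W).integrable ((hf.exp hC c).grad₁.continuous.comp hWc)
  have hset : integrableExpSet X (stdG κ) = Set.univ := Set.eq_univ_of_forall h_integ
  have hmgf : ∀ c, HasDerivAt (mgf X (stdG κ)) (∫ g, X g * Real.exp (c * X g) ∂(stdG κ)) c :=
    fun c => hasDerivAt_mgf (by rw [hset]; simp)
  have hquad : ∀ c : ℝ, HasDerivAt (fun c : ℝ => -(c * m + c ^ 2 / 2)) (-(m + c)) c := by
    intro c
    convert! (((hasDerivAt_id c).mul_const m).add (((hasDerivAt_id c).pow 2).div_const 2)).neg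
      using 1
    simp
  have hder := fun c : ℝ => (hmgf c).mul (hquad c).exp
  have hanti : AntitoneOn (fun c => mgf X (stdG κ) c * Real.exp (-(c * m + c ^ 2 / 2)))
      (Set.Ici 0) := by
    refine antitoneOn_of_hasDerivWithinAt_nonpos (convex_Ici _)
      (fun c _ => (hder c).continuousAt.continuousWithinAt)
      (fun c _ => (hder c).hasDerivWithinAt) fun c hc => ?_
    rw [interior_Ici] at hc
    have h1 := hf.integral_mul_exp_le hC W hW (le_of_lt hc)
    have h2 := mul_le_mul_of_nonneg_right h1 (Real.exp_pos (-(c * m + c ^ 2 / 2))).le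
    have h3 : mgf X (stdG κ) c = ∫ g, Real.exp (c * f (W.mulVec g)) ∂(stdG κ) := rfl
    rw [h3]
    change _ ≤ (m + c) * _ * _ at h2
    linarith
  have hmain : mgf X (stdG κ) r ≤ Real.exp (r * m + r ^ 2 / 2) := by
    have := hanti (Set.mem_Ici.2 le_rfl) (Set.mem_Ici.2 hr) hr
    simp only [mgf_zero] at this
    rw [Real.exp_neg] at this
    have h3 := (mul_inv_le_iff₀ (Real.exp_pos _)).1 this
    simpa using h3
  have hch := measure_ge_le_exp_mul_mgf (X := X) (μ := stdG κ) (m + r) hr (h_integ r)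
  rw [← ofReal_measureReal]
  refine ENNReal.ofReal_le_ofReal (hch.trans ?_)
  calc _ ≤ Real.exp (-r * (m + r)) * Real.exp (r * m + r ^ 2 / 2) := by gcongr
    _ = _ := by rw [← Real.exp_add]; congr 1; ring

end Concentration

section LogSumExp

variable {α ι : Type*} [Fintype α] [Fintype ι]

/-- The log-sum-exp function. -/
def lse (y : α → ℝ) : ℝ := Real.log (∑ a, Real.exp (y a))

lemma exp_lse [Nonempty α] (y : α → ℝ) : Real.exp (lse y) = ∑ a, Real.exp (y a) :=
  Real.exp_log (Finset.sum_pos (fun _ _ => Real.exp_pos _) Finset.univ_nonempty)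

lemma le_lse (y : α → ℝ) (a : α) : y a ≤ lse y := by
  have : Nonempty α := ⟨a⟩
  rw [← Real.exp_le_exp, exp_lse]
  exact Finset.single_le_sum (f := fun a => Real.exp (y a)) (fun _ _ => (Real.exp_pos _).le)
    (Finset.mem_univ a)

lemma lse_le [Nonempty α] {y : α → ℝ} {b : ℝ} (h : ∀ a, y a ≤ b) :
    lse y ≤ b + Real.log (Fintype.card α) := by
  have hcard : (0 : ℝ) < Fintype.card α := by exact_mod_cast Fintype.card_pos
  rw [← Real.exp_le_exp, exp_lse, Real.exp_add, Real.exp_log hcard]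
  calc ∑ a, Real.exp (y a) ≤ ∑ _a : α, Real.exp b :=
        Finset.sum_le_sum fun a _ => Real.exp_le_exp.2 (h a)
    _ = _ := by simp [mul_comm]

lemma log_card_nonneg (α : Type*) [Fintype α] : 0 ≤ Real.log (Fintype.card α) :=
  Real.log_natCast_nonneg _

lemma abs_lse_le [Nonempty α] (y : α → ℝ) : |lse y| ≤ ‖y‖ + Real.log (Fintype.card α) := by
  obtain ⟨a⟩ := ‹Nonempty α›
  have hy : ∀ a, |y a| ≤ ‖y‖ := fun a => norm_le_pi_norm y a
  rw [abs_le]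
  constructor
  · linarith [le_lse y a, (abs_le.1 (hy a)).1, log_card_nonneg α]
  · have : Nonempty α := ⟨a⟩
    exact lse_le fun a => (abs_le.1 (hy a)).2

lemma lse_add_const [Nonempty α] (y : α → ℝ) (c : ℝ) :
    lse (fun a => y a + c) = lse y + c := by
  rw [← Real.exp_eq_exp, exp_lse, Real.exp_add, exp_lse, Finset.sum_mul]
  simp only [Real.exp_add]

lemma sum_exp_sub_lse [Nonempty α] (y : α → ℝ) : ∑ a, Real.exp (y a - lse y) = 1 := by
  simp only [Real.exp_sub, ← Finset.sum_div, exp_lse]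
  exact div_self (Finset.sum_pos (fun _ _ => Real.exp_pos _) Finset.univ_nonempty).ne'

lemma continuous_lse [Nonempty α] : Continuous (lse : (α → ℝ) → ℝ) := by
  unfold lse
  refine Continuous.log (by fun_prop) fun y => ?_
  exact (Finset.sum_pos (fun _ _ => Real.exp_pos _) Finset.univ_nonempty).ne'

lemma HasGrad.lse [Nonempty α] {f : α → (ι → ℝ) → ℝ} {d : α → ι → (ι → ℝ) → ℝ}
    (h : ∀ i, HasGrad (f i) (d i)) :
    HasGrad (fun z => _root_.lse fun i => f i z)
      (fun b z => ∑ i, Real.exp (f i z - _root_.lse fun i => f i z) * d i b z) := by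
  intro z
  have h0 : (∑ a, Real.exp (f a z)) ≠ 0 :=
    (Finset.sum_pos (fun _ _ => Real.exp_pos _) Finset.univ_nonempty).ne'
  have h1 := (HasFDerivAt.fun_sum (u := Finset.univ) fun i _ => (h i z).exp).log h0
  convert! h1 using 1
  simp only [Real.exp_sub, exp_lse, Finset.smul_sum, smul_smul, Finset.sum_smul]
  rw [Finset.sum_comm]
  exact Finset.sum_congr rfl fun i _ => Finset.sum_congr rfl fun b _ => by congr 1; ring

lemma hasGrad_apply [DecidableEq ι] (b : ι) :
    HasGrad (fun z : ι → ℝ => z b) (fun a _ => if a = b then 1 else 0) := by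
  intro z
  convert! hasFDerivAt_apply (𝕜 := ℝ) b z using 1
  simp

end LogSumExp

section SoftExtremum

variable {I J : Type*} [Fintype I] [Fintype J]

/-- A smooth approximation of `max_i (s * max_j z (i, j))`. -/
def softExt (s β : ℝ) (z : I × J → ℝ) : ℝ :=
  β⁻¹ * lse fun i => s * lse fun j => β * z (i, j)

/-- The Gibbs weights of `softExt`. -/
def softWeight (s β : ℝ) (a : I × J) (z : I × J → ℝ) : ℝ :=
  Real.exp (β * z a + (s - 1) * (lse fun j => β * z (a.1, j)) -
    lse fun i => s * lse fun j => β * z (i, j))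

/-- The Gibbs weights of the inner soft maximum. -/
def rowWeight (β : ℝ) (a : I × J) (z : I × J → ℝ) : ℝ :=
  Real.exp (β * z a - lse fun j => β * z (a.1, j))

lemma softWeight_eq (s β : ℝ) (a : I × J) (z : I × J → ℝ) :
    softWeight s β a z = Real.exp ((s * lse fun j => β * z (a.1, j)) -
      lse fun i => s * lse fun j => β * z (i, j)) * rowWeight β a z := by
  rw [softWeight, rowWeight, ← Real.exp_add]
  congr 1
  ring

lemma softWeight_nonneg (s β : ℝ) (a : I × J) (z : I × J → ℝ) : 0 ≤ softWeight s β a z :=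
  (Real.exp_pos _).le

lemma rowWeight_nonneg (β : ℝ) (a : I × J) (z : I × J → ℝ) : 0 ≤ rowWeight β a z :=
  (Real.exp_pos _).le

lemma rowWeight_le_one (β : ℝ) (a : I × J) (z : I × J → ℝ) : rowWeight β a z ≤ 1 := by
  rw [rowWeight, Real.exp_le_one_iff, sub_nonpos]
  exact le_lse (fun j => β * z (a.1, j)) a.2

variable [Nonempty I] [Nonempty J]

lemma sum_softWeight (s β : ℝ) (z : I × J → ℝ) : ∑ a, softWeight s β a z = 1 := by
  rw [Fintype.sum_prod_type]
  simp only [softWeight_eq, rowWeight, ← Finset.mul_sum]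
  simp only [sum_exp_sub_lse (fun j => β * z (_, j)), mul_one]
  exact sum_exp_sub_lse fun i => s * lse fun j => β * z (i, j)

lemma softWeight_le_one (s β : ℝ) (a : I × J) (z : I × J → ℝ) : softWeight s β a z ≤ 1 := by
  rw [← sum_softWeight s β z]
  exact Finset.single_le_sum (f := fun a => softWeight s β a z)
    (fun a _ => softWeight_nonneg s β a z) (Finset.mem_univ a)

lemma abs_softExt_le {s β : ℝ} (hs : |s| = 1) (hβ : 0 < β) :
    ∃ C, ∀ z : I × J → ℝ, |softExt s β z| ≤ C * (1 + ‖z‖) := by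
  refine ⟨1 + β⁻¹ * (Real.log (Fintype.card J) + Real.log (Fintype.card I)), fun z => ?_⟩
  have hJ := log_card_nonneg J
  have hI := log_card_nonneg I
  have hrow : ‖fun i => s * lse fun j => β * z (i, j)‖ ≤
      β * ‖z‖ + Real.log (Fintype.card J) := by
    rw [pi_norm_le_iff_of_nonneg (by positivity)]
    intro i
    rw [Real.norm_eq_abs, abs_mul, hs, one_mul]
    refine (abs_lse_le _).trans ?_
    gcongr
    rw [pi_norm_le_iff_of_nonneg (by positivity)]
    intro j
    rw [norm_mul, Real.norm_of_nonneg hβ.le]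
    gcongr
    exact norm_le_pi_norm z (i, j)
  rw [softExt, abs_mul, abs_of_pos (inv_pos.2 hβ)]
  calc _ ≤ β⁻¹ * (β * ‖z‖ + Real.log (Fintype.card J) + Real.log (Fintype.card I)) := by
        gcongr
        exact (abs_lse_le _).trans (by gcongr)
    _ = ‖z‖ + β⁻¹ * (Real.log (Fintype.card J) + Real.log (Fintype.card I)) := by
        field_simp
        ring
    _ ≤ _ := by
        have : 0 ≤ β⁻¹ * (Real.log (Fintype.card J) + Real.log (Fintype.card I)) := by positivity
        nlinarith [norm_nonneg z]

variable [DecidableEq I] [DecidableEq J]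

lemma hasGrad_row (β : ℝ) (i : I) :
    HasGrad (fun z : I × J → ℝ => lse fun j => β * z (i, j))
      (fun b z => if b.1 = i then β * rowWeight β b z else 0) := by
  refine (HasGrad.lse fun j => (hasGrad_apply (i, j)).const_mul β).congr fun b z => ?_
  obtain ⟨i', j'⟩ := b
  by_cases h : i' = i
  · subst h
    simp [rowWeight, mul_comm]
  · simp [h]

lemma hasGrad_total (s β : ℝ) :
    HasGrad (fun z : I × J → ℝ => lse fun i => s * lse fun j => β * z (i, j))
      (fun b z => s * β * softWeight s β b z) := by
  refine (HasGrad.lse fun i => (hasGrad_row β i).const_mul s).congr fun b z => ?_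
  rw [softWeight_eq, Finset.sum_eq_single b.1]
  · simp only [if_true]
    ring
  · intro i _ hi
    simp [Ne.symm hi]
  · simp

lemma hasGrad_softWeight (s β : ℝ) (a : I × J) :
    HasGrad (softWeight s β a) (fun b z => softWeight s β a z *
      (β * ((if b = a then 1 else 0) + (s - 1) * (if b.1 = a.1 then rowWeight β b z else 0)
        - s * softWeight s β b z))) := by
  have h := ((((hasGrad_apply a).const_mul β).add ((hasGrad_row β a.1).const_mul (s - 1))).add
    ((hasGrad_total s β).const_mul (-1))).exp
  have e : softWeight s β a = fun z : I × J → ℝ => Real.exp (β * z a +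
      (s - 1) * (lse fun j => β * z (a.1, j)) +
      -1 * lse fun i => s * lse fun j => β * z (i, j)) := by
    funext z
    rw [softWeight]
    congr 1
    ring
  have h' : HasGrad (softWeight s β a) _ := e ▸ h
  refine h'.congr fun b z => ?_
  rw [← congrFun e z]
  split_ifs <;> ring

lemma hasGrad_softExt (s : ℝ) {β : ℝ} (hβ : 0 < β) :
    HasGrad (softExt s β : (I × J → ℝ) → ℝ) (fun b z => s * softWeight s β b z) :=
  ((hasGrad_total s β).const_mul β⁻¹).congr fun b z => by
    field_simp

lemma gaussSmooth_softExt {s β : ℝ} (hs : |s| = 1) (hβ : 0 < β) :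
    GaussSmooth (softExt s β : (I × J → ℝ) → ℝ) (fun b z => s * softWeight s β b z)
      (fun a b z => s * (softWeight s β a z *
      (β * ((if b = a then 1 else 0) + (s - 1) * (if b.1 = a.1 then rowWeight β b z else 0)
        - s * softWeight s β b z)))) where
  grad₁ := hasGrad_softExt s hβ
  grad₂ a := (hasGrad_softWeight s β a).const_mul s
  cont₂ a b := by
    have h1 := fun a : I × J => (hasGrad_softWeight s β a).continuous
    have h2 : Continuous fun z : I × J → ℝ => if b.1 = a.1 then rowWeight β b z else 0 := by
      split_ifs
      · unfold rowWeight
        have := (hasGrad_row (J := J) β b.1).continuous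
        fun_prop
      · exact continuous_const
    fun_prop
  growth₀ := by
    obtain ⟨C, hC⟩ := abs_softExt_le (I := I) (J := J) hs hβ
    exact ExpGrowth.of_linear hC
  growth₁ a := (ExpGrowth.of_bounded (C := 1) fun z => by
    rw [abs_of_nonneg (softWeight_nonneg s β a z)]
    exact softWeight_le_one s β a z).const_mul s
  growth₂ a b := by
    have hw : ∀ a : I × J, ExpGrowth (softWeight s β a) := fun a =>
      ExpGrowth.of_bounded (C := 1) fun z => by
        rw [abs_of_nonneg (softWeight_nonneg s β a z)]
        exact softWeight_le_one s β a z
    have hr : ExpGrowth fun z : I × J → ℝ => if b.1 = a.1 then rowWeight β b z else 0 :=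
      ExpGrowth.of_bounded (C := 1) fun z => by
        split_ifs
        · rw [abs_of_nonneg (rowWeight_nonneg β b z)]
          exact rowWeight_le_one β b z
        · simp
    have := ((hw a).mul ((((ExpGrowth.const (if b = a then (1 : ℝ) else 0)).add
      (hr.const_mul (s - 1))).add ((hw b).const_mul (-s))).const_mul β)).const_mul s
    simpa only [neg_mul, ← sub_eq_add_neg] using this

end SoftExtremum

section Comparison

variable {I J M N : Type*} [Fintype M] [Fintype N]

/-- The coefficients of the bilinear Gaussian process `A ↦ ⟨u_j, A x_i⟩`. -/
def bilinMatrix (x : I → N → ℝ) (u : J → M → ℝ) : Matrix (I × J) (M × N) ℝ :=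
  Matrix.of fun a k => u a.2 k.1 * x a.1 k.2

lemma bilinMatrix_mul_transpose (x : I → N → ℝ) (u : J → M → ℝ) (a b : I × J) :
    (bilinMatrix x u * (bilinMatrix x u).transpose) a b =
      (∑ k, u a.2 k * u b.2 k) * ∑ l, x a.1 l * x b.1 l := by
  simp only [Matrix.mul_apply, Matrix.transpose_apply, bilinMatrix, Matrix.of_apply,
    Fintype.sum_prod_type, Finset.sum_mul_sum]
  exact Finset.sum_congr rfl fun k _ => Finset.sum_congr rfl fun l _ => by ring

lemma sum_mul_le_one_of_sum_sq_le_one {v w : N → ℝ} (hv : ∑ l, v l ^ 2 ≤ 1) (hw : ∑ l, w l ^ 2 ≤ 1) :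
    ∑ l, v l * w l ≤ 1 := by
  have h : ∑ l, v l * w l ≤ ∑ l, (v l ^ 2 + w l ^ 2) / 2 :=
    Finset.sum_le_sum fun l _ => by nlinarith [sq_nonneg (v l - w l)]
  rw [← Finset.sum_div, Finset.sum_add_distrib] at h
  linarith

lemma abs_sum_mul_le_one_of_sum_sq_le_one {v w : N → ℝ} (hv : ∑ l, v l ^ 2 ≤ 1)
    (hw : ∑ l, w l ^ 2 ≤ 1) : |∑ l, v l * w l| ≤ 1 := by
  rw [abs_le]
  refine ⟨?_, sum_mul_le_one_of_sum_sq_le_one hv hw⟩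
  have := sum_mul_le_one_of_sum_sq_le_one (v := fun l => - v l) (by simpa using hv) hw
  simp only [neg_mul, Finset.sum_neg_distrib] at this
  linarith

/-- The bilinear process augmented with an independent standard Gaussian. -/
def augmentedMatrix (x : I → N → ℝ) (u : J → M → ℝ) :
    Matrix (I × J) (((M × N) ⊕ Unit) ⊕ (M ⊕ N)) ℝ :=
  Matrix.of fun a => Sum.elim (Sum.elim (fun k => bilinMatrix x u a k) fun _ => 1) fun _ => 0

/-- The coefficients of the decoupled process `⟨u_j, h⟩ + ⟨x_i, H⟩`. -/
def decoupledMatrix (x : I → N → ℝ) (u : J → M → ℝ) :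
    Matrix (I × J) (((M × N) ⊕ Unit) ⊕ (M ⊕ N)) ℝ :=
  Matrix.of fun a => Sum.elim (fun _ => 0) (Sum.elim (u a.2) (x a.1))

lemma augmentedMatrix_mulVec (x : I → N → ℝ) (u : J → M → ℝ)
    (g : ((M × N) ⊕ Unit) ⊕ (M ⊕ N) → ℝ) :
    (augmentedMatrix x u).mulVec g = fun a =>
      (bilinMatrix x u).mulVec (fun k => g (Sum.inl (Sum.inl k))) a + g (Sum.inl (Sum.inr ())) := by
  funext a
  simp [augmentedMatrix, Matrix.mulVec, dotProduct, Fintype.sum_sum_type]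

lemma decoupledMatrix_mulVec (x : I → N → ℝ) (u : J → M → ℝ)
    (g : ((M × N) ⊕ Unit) ⊕ (M ⊕ N) → ℝ) :
    (decoupledMatrix x u).mulVec g = fun a =>
      ∑ l, x a.1 l * g (Sum.inr (Sum.inr l)) + ∑ k, u a.2 k * g (Sum.inr (Sum.inl k)) := by
  funext a
  simp [decoupledMatrix, Matrix.mulVec, dotProduct, Fintype.sum_sum_type, add_comm]

lemma decoupledMatrix_mul_augmentedMatrix (x : I → N → ℝ) (u : J → M → ℝ) :
    decoupledMatrix x u * (augmentedMatrix x u).transpose = 0 := by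
  ext a b
  simp [decoupledMatrix, augmentedMatrix, Matrix.mul_apply, Fintype.sum_sum_type]

lemma covariance_sub (x : I → N → ℝ) (u : J → M → ℝ) (a b : I × J) :
    (augmentedMatrix x u * (augmentedMatrix x u).transpose -
      decoupledMatrix x u * (decoupledMatrix x u).transpose) a b =
    (1 - ∑ k, u a.2 k * u b.2 k) * (1 - ∑ l, x a.1 l * x b.1 l) := by
  have h := bilinMatrix_mul_transpose x u a b
  simp only [Matrix.mul_apply, Matrix.transpose_apply] at h
  simp only [Matrix.sub_apply, Matrix.mul_apply, Matrix.transpose_apply, augmentedMatrix,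
    decoupledMatrix, Matrix.of_apply, Fintype.sum_sum_type, Sum.elim_inl, Sum.elim_inr, h]
  simp
  ring

variable [Fintype I] [Fintype J] [Nonempty I] [Nonempty J]

lemma softExt_add_const (s : ℝ) {β : ℝ} (hβ : 0 < β) (z : I × J → ℝ) (c : ℝ) :
    softExt s β (fun a => z a + c) = softExt s β z + s * c := by
  simp only [softExt, mul_add, lse_add_const]
  field_simp

lemma softExt_add_apply (s : ℝ) {β : ℝ} (v : I → ℝ) (w : J → ℝ) :
    softExt s β (fun a => v a.1 + w a.2) =
      β⁻¹ * lse (fun i => s * β * v i) + s * (β⁻¹ * lse fun j => β * w j) := by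
  have h : ∀ i, lse (fun j => β * (v i + w j)) = lse (fun j => β * w j) + β * v i := by
    intro i
    rw [← lse_add_const]
    congr 1
    funext j
    ring
  have h2 : (fun i => s * (lse (fun j => β * w j) + β * v i)) =
      fun i => s * β * v i + s * lse (fun j => β * w j) := by
    funext i
    ring
  simp only [softExt, h, h2, lse_add_const]
  ring

lemma continuous_softExt (s β : ℝ) : Continuous (softExt s β : (I × J → ℝ) → ℝ) := by
  classical
  exact ((hasGrad_total s β).const_mul β⁻¹).continuous

lemma integrable_lse_linear {K : Type*} [Fintype K] (c : ℝ) (v : I → K → ℝ) :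
    Integrable (fun g => lse fun i => c * ∑ l, v i l * g l) (stdG K) := by
  have hl : ExpGrowth (lse : (I → ℝ) → ℝ) := by
    refine ExpGrowth.of_linear (C := 1 + Real.log (Fintype.card I)) fun y => ?_
    have := abs_lse_le y
    nlinarith [log_card_nonneg I, norm_nonneg y]
  have := (hl.comp_mulVec (Matrix.of fun i l => c * v i l)).integrable
    (continuous_lse.comp (continuous_mulVec_const _))
  refine this.congr (ae_of_all _ fun g => congrArg lse (funext fun i => ?_))
  simp only [Matrix.mulVec, dotProduct, Matrix.of_apply, Finset.mul_sum, mul_assoc]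

/-- Gordon's comparison inequality for the bilinear Gaussian process. -/
theorem integral_softExt_bilin_le {s β : ℝ} (hs : |s| = 1) (hβ : 0 < β)
    {x : I → N → ℝ} {u : J → M → ℝ} (hx : ∀ i, ∑ l, x i l ^ 2 = 1) (hu : ∀ j, ∑ k, u j k ^ 2 ≤ 1) :
    ∫ g, softExt s β ((bilinMatrix x u).mulVec g) ∂(stdG (M × N)) ≤
      β⁻¹ * (∫ g, lse (fun i => s * β * ∑ l, x i l * g l) ∂(stdG N)) +
        s * (β⁻¹ * ∫ g, lse (fun j => β * ∑ k, u j k * g k) ∂(stdG M)) := by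
  classical
  have hs2 : s * s = 1 := by rw [← abs_mul_abs_self, hs, one_mul]
  have hcmp := (gaussSmooth_softExt (I := I) (J := J) hs hβ).integral_sub_le
    (decoupledMatrix x u) (augmentedMatrix x u) (decoupledMatrix_mul_augmentedMatrix x u)
    (Ψ := fun _ => 0) (ExpGrowth.const 0) continuous_const (K := 0) (by simp) (by
      intro z
      refine Finset.sum_nonpos fun a _ => Finset.sum_nonpos fun b _ => ?_
      rw [covariance_sub]
      by_cases hab : b.1 = a.1
      · have : ∑ l, x a.1 l * x b.1 l = 1 := by
          rw [hab, ← hx a.1]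
          exact Finset.sum_congr rfl fun l _ => by ring
        simp [this]
      · have hne : b ≠ a := fun h => hab (by rw [h])
        refine mul_nonpos_of_nonneg_of_nonpos (mul_nonneg
          (sub_nonneg.2 (sum_mul_le_one_of_sum_sq_le_one (hu _) (hu _)))
          (sub_nonneg.2 (sum_mul_le_one_of_sum_sq_le_one (hx _).le (hx _).le))) ?_
        simp only [hab, hne, if_false]
        have h1 := softWeight_nonneg s β a z
        have h2 := softWeight_nonneg s β b z
        have : s * (softWeight s β a z * (β * (0 + (s - 1) * 0 - s * softWeight s β b z))) =
          -(s * s * (softWeight s β a z * (β * softWeight s β b z))) := by ring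
        rw [this, hs2, one_mul, neg_nonpos]
        positivity)
  simp only [zero_div, add_zero] at hcmp
  have hc := continuous_softExt (I := I) (J := J) s β
  have hZ := continuous_mulVec_const (bilinMatrix x u)
  have hleft : ∫ g, softExt s β ((augmentedMatrix x u).mulVec g)
        ∂(stdG (((M × N) ⊕ Unit) ⊕ (M ⊕ N))) =
      ∫ g, softExt s β ((bilinMatrix x u).mulVec g) ∂(stdG (M × N)) := by
    have hinj : Function.Injective
        (fun k : M × N => (Sum.inl (Sum.inl k) : ((M × N) ⊕ Unit) ⊕ (M ⊕ N))) :=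
      Sum.inl_injective.comp Sum.inl_injective
    have hinj' : Function.Injective
        (fun k : Unit => (Sum.inl (Sum.inr k) : ((M × N) ⊕ Unit) ⊕ (M ⊕ N))) :=
      Sum.inl_injective.comp Sum.inr_injective
    simp only [augmentedMatrix_mulVec, softExt_add_const s hβ]
    have h0 : ∫ g : Unit → ℝ, g () ∂(stdG Unit) = 0 := by
      have := integral_coord_mul_stdG (κ := Unit) () (f := fun _ => 1) (f' := fun _ => 0)
        (fun g x => hasDerivAt_const _ _) continuous_const (ExpGrowth.const 1) (ExpGrowth.const 0)
        continuous_const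
      simpa using this
    have e1 := integral_comp_stdG hinj (hc.comp hZ)
    have e2 := integral_comp_stdG hinj' (f := fun g => g ()) (continuous_apply ())
    simp only [Function.comp_apply] at e1
    rw [integral_add, integral_const_mul, e1, e2, h0, mul_zero, add_zero]
    · obtain ⟨C, hC⟩ := abs_softExt_le (I := I) (J := J) hs hβ
      refine ExpGrowth.integrable ?_ (by fun_prop)
      refine ((ExpGrowth.of_linear hC).comp_mulVec (bilinMatrix x u)).comp_of_norm_le
        (T := fun (g : ((M × N) ⊕ Unit) ⊕ (M ⊕ N) → ℝ) k => g (Sum.inl (Sum.inl k))) (B := 1)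
        zero_le_one fun g => ?_
      rw [one_mul, pi_norm_le_iff_of_nonneg (norm_nonneg _)]
      exact fun k => norm_le_pi_norm g _
    · refine Integrable.const_mul ?_ s
      refine ExpGrowth.integrable (ExpGrowth.of_linear (C := 1) fun g => ?_) (by fun_prop)
      have := norm_le_pi_norm g (Sum.inl (Sum.inr ()))
      rw [Real.norm_eq_abs] at this
      linarith
  have hright : ∫ g, softExt s β ((decoupledMatrix x u).mulVec g)
        ∂(stdG (((M × N) ⊕ Unit) ⊕ (M ⊕ N))) =
      β⁻¹ * (∫ g, lse (fun i => s * β * ∑ l, x i l * g l) ∂(stdG N)) +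
        s * (β⁻¹ * ∫ g, lse (fun j => β * ∑ k, u j k * g k) ∂(stdG M)) := by
    have hinj : Function.Injective
        (fun k : N => (Sum.inr (Sum.inr k) : ((M × N) ⊕ Unit) ⊕ (M ⊕ N))) :=
      Sum.inr_injective.comp Sum.inr_injective
    have hinj' : Function.Injective
        (fun k : M => (Sum.inr (Sum.inl k) : ((M × N) ⊕ Unit) ⊕ (M ⊕ N))) :=
      Sum.inr_injective.comp Sum.inl_injective
    have c1 : Continuous fun g : N → ℝ => lse fun i => s * β * ∑ l, x i l * g l :=
      continuous_lse.comp (by fun_prop)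
    have c2 : Continuous fun g : M → ℝ => lse fun j => β * ∑ l, u j l * g l :=
      continuous_lse.comp (by fun_prop)
    have e1 := integral_comp_stdG hinj c1
    have e2 := integral_comp_stdG hinj' c2
    simp only [decoupledMatrix_mulVec]
    have hsplit := fun g : ((M × N) ⊕ Unit) ⊕ (M ⊕ N) → ℝ =>
      softExt_add_apply s (β := β) (fun i => ∑ l, x i l * g (Sum.inr (Sum.inr l)))
        (fun j => ∑ k, u j k * g (Sum.inr (Sum.inl k)))
    simp only [hsplit]
    rw [integral_add, integral_const_mul, integral_const_mul, integral_const_mul, e1, e2]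
    · refine Integrable.const_mul ?_ _
      have := integrable_lse_linear (s * β) x
      rw [← map_comp_stdG hinj] at this
      exact this.comp_aemeasurable
        (measurable_pi_lambda _ fun k => measurable_pi_apply _).aemeasurable
    · refine (Integrable.const_mul ?_ _).const_mul _
      have := integrable_lse_linear β u
      rw [← map_comp_stdG hinj'] at this
      exact this.comp_aemeasurable
        (measurable_pi_lambda _ fun k => measurable_pi_apply _).aemeasurable
  rw [← hleft, ← hright]
  exact hcmp

/-- Concentration of the soft extremum of the bilinear Gaussian process. -/
theorem measure_softExt_bilin_ge_le {s β : ℝ} (hs : |s| = 1) (hβ : 0 < β)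
    {x : I → N → ℝ} {u : J → M → ℝ} (hx : ∀ i, ∑ l, x i l ^ 2 = 1) (hu : ∀ j, ∑ k, u j k ^ 2 ≤ 1)
    {r : ℝ} (hr : 0 ≤ r) :
    (stdG (M × N)) {g | (∫ g, softExt s β ((bilinMatrix x u).mulVec g) ∂(stdG (M × N))) + r ≤
      softExt s β ((bilinMatrix x u).mulVec g)} ≤ ENNReal.ofReal (Real.exp (-r ^ 2 / 2)) := by
  classical
  have hs2 : s * s = 1 := by rw [← abs_mul_abs_self, hs, one_mul]
  obtain ⟨C, hC⟩ := abs_softExt_le (I := I) (J := J) hs hβ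
  refine (gaussSmooth_softExt (I := I) (J := J) hs hβ).measure_ge_le hC (bilinMatrix x u)
    (fun z z' => ?_) hr
  calc _ ≤ ∑ a : I × J, ∑ b : I × J, softWeight s β a z * softWeight s β b z' := by
        refine Finset.sum_le_sum fun a _ => Finset.sum_le_sum fun b _ => ?_
        rw [bilinMatrix_mul_transpose]
        have h1 := softWeight_nonneg s β a z
        have h2 := softWeight_nonneg s β b z'
        have h3 : (∑ k, u a.2 k * u b.2 k) * ∑ l, x a.1 l * x b.1 l ≤ 1 := by
          refine (le_abs_self _).trans ?_
          rw [abs_mul]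
          exact mul_le_one₀ (abs_sum_mul_le_one_of_sum_sq_le_one (hu _) (hu _)) (abs_nonneg _)
            (abs_sum_mul_le_one_of_sum_sq_le_one (hx _).le (hx _).le)
        have : s * softWeight s β a z * (s * softWeight s β b z') =
            softWeight s β a z * softWeight s β b z' := by
          linear_combination (softWeight s β a z * softWeight s β b z') * hs2
        rw [this]
        exact mul_le_of_le_one_left (by positivity) h3
    _ = 1 := by
        rw [← Finset.sum_mul_sum, sum_softWeight, sum_softWeight, one_mul]

end Comparison

section Moments

variable {K : Type*} [Fintype K]

/-- The Euclidean length of a finite family of reals. -/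
def l2 (v : K → ℝ) : ℝ := Real.sqrt (∑ k, v k ^ 2)

lemma l2_nonneg (v : K → ℝ) : 0 ≤ l2 v := Real.sqrt_nonneg _

lemma l2_sq (v : K → ℝ) : l2 v ^ 2 = ∑ k, v k ^ 2 :=
  Real.sq_sqrt (Finset.sum_nonneg fun _ _ => sq_nonneg _)

lemma continuous_l2 : Continuous (l2 : (K → ℝ) → ℝ) := by
  unfold l2
  fun_prop

lemma expGrowth_apply (k : K) : ExpGrowth fun g : K → ℝ => g k :=
  ExpGrowth.of_linear (C := 1) fun g => by
    have := norm_le_pi_norm g k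
    rw [Real.norm_eq_abs] at this
    linarith

lemma expGrowth_sum_sq : ExpGrowth fun g : K → ℝ => ∑ k, g k ^ 2 := by
  simp only [sq]
  exact ExpGrowth.sum _ fun k => (expGrowth_apply k).mul (expGrowth_apply k)

lemma integrable_sum_sq : Integrable (fun g : K → ℝ => ∑ k, g k ^ 2) (stdG K) :=
  expGrowth_sum_sq.integrable (by fun_prop)

lemma integrable_l2 : Integrable (l2 : (K → ℝ) → ℝ) (stdG K) := by
  refine (((ExpGrowth.const 1).add expGrowth_sum_sq).mono fun g => ?_).integrable continuous_l2
  rw [← l2_sq, abs_of_nonneg (l2_nonneg g), abs_of_nonneg (by positivity)]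
  nlinarith [sq_nonneg (l2 g - 1), l2_nonneg g]

lemma sum_mul_le_l2 {v : K → ℝ} (hv : ∑ k, v k ^ 2 ≤ 1) (g : K → ℝ) : ∑ k, v k * g k ≤ l2 g := by
  refine (Real.sum_mul_le_sqrt_mul_sqrt _ v g).trans ?_
  exact mul_le_of_le_one_left (Real.sqrt_nonneg _) (Real.sqrt_le_one.2 hv)

lemma integral_sq_apply (k : K) : ∫ g : K → ℝ, g k ^ 2 ∂(stdG K) = 1 := by
  classical
  have := integral_coord_mul_stdG k (f := fun g => g k) (f' := fun _ => 1)
    (fun g x => by simpa using hasDerivAt_id' x) (continuous_apply k) (expGrowth_apply k)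
    (ExpGrowth.const 1) continuous_const
  simpa [sq] using this

lemma integral_sum_sq : ∫ g : K → ℝ, ∑ k, g k ^ 2 ∂(stdG K) = Fintype.card K := by
  rw [integral_finsetSum]
  · simp [integral_sq_apply]
  · intro k _
    simp only [sq]
    exact ((expGrowth_apply k).mul (expGrowth_apply k)).integrable (by fun_prop)

lemma integral_sum_sq_sq : ∫ g : K → ℝ, (∑ k, g k ^ 2) ^ 2 ∂(stdG K) =
    (Fintype.card K : ℝ) ^ 2 + 2 * Fintype.card K := by
  classical
  have hk : ∀ k : K, ∫ g : K → ℝ, g k * (g k * ∑ l, g l ^ 2) ∂(stdG K) =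
      Fintype.card K + 2 := by
    intro k
    have hg2 : ExpGrowth fun g : K → ℝ => 2 * g k ^ 2 := by
      simp only [sq]
      exact ((expGrowth_apply k).mul (expGrowth_apply k)).const_mul 2
    have hd : ∀ (g : K → ℝ) (x : ℝ), HasDerivAt (fun y => Function.update g k y k *
        ∑ l, Function.update g k y l ^ 2) ((∑ l, Function.update g k x l ^ 2) +
          2 * Function.update g k x k ^ 2) x := by
      intro g x
      have h1 := hasDerivAt_pi.1 (hasDerivAt_update g k x)
      convert! (h1 k).fun_mul (HasDerivAt.fun_sum fun l (_ : l ∈ Finset.univ) => (h1 l).fun_pow 2) using 1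
      simp [Pi.single_apply]
      ring
    rw [integral_coord_mul_stdG k hd (by fun_prop) ((expGrowth_apply k).mul expGrowth_sum_sq)
      (expGrowth_sum_sq.add hg2) (by fun_prop), integral_add integrable_sum_sq
      (hg2.integrable (by fun_prop)), integral_sum_sq, integral_const_mul, integral_sq_apply, mul_one]
  have e : ∀ g : K → ℝ, (∑ k, g k ^ 2) ^ 2 = ∑ k, g k * (g k * ∑ l, g l ^ 2) := by
    intro g
    rw [sq, Finset.sum_mul]
    exact Finset.sum_congr rfl fun k _ => by ring
  simp only [e]
  rw [integral_finsetSum]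
  · simp only [hk, Finset.sum_const, Finset.card_univ, nsmul_eq_mul]
    ring
  · intro k _
    exact ((expGrowth_apply k).mul ((expGrowth_apply k).mul expGrowth_sum_sq)).integrable
      (by fun_prop)

lemma integral_l2_le : ∫ g, l2 g ∂(stdG K) ≤ Real.sqrt (Fintype.card K) := by
  cases isEmpty_or_nonempty K
  · simp [l2]
  have hm : 0 < Real.sqrt (Fintype.card K) :=
    Real.sqrt_pos.2 (by exact_mod_cast Fintype.card_pos)
  set q := Real.sqrt (Fintype.card K) with hq
  have hq2 : q * q = Fintype.card K := Real.mul_self_sqrt (Nat.cast_nonneg _)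
  have h : ∀ g : K → ℝ, l2 g ≤ (2 * q)⁻¹ * (∑ k, g k ^ 2) + q / 2 := by
    intro g
    rw [← l2_sq, ← sub_nonneg]
    have : (2 * q)⁻¹ * l2 g ^ 2 + q / 2 - l2 g = (2 * q)⁻¹ * (l2 g - q) ^ 2 := by
      field_simp
      ring
    rw [this]
    positivity
  calc _ ≤ ∫ g : K → ℝ, ((2 * q)⁻¹ * (∑ k, g k ^ 2) + q / 2) ∂(stdG K) :=
        integral_mono integrable_l2 ((integrable_sum_sq.const_mul _).add (integrable_const _)) h
    _ = q := by
        rw [integral_add (integrable_sum_sq.const_mul _) (integrable_const _),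
          integral_const_mul, integral_sum_sq, ← hq2]
        simp
        field_simp
        ring

lemma le_integral_l2 [Nonempty K] :
    Real.sqrt (Fintype.card K) - 1 / Real.sqrt (Fintype.card K) ≤ ∫ g, l2 g ∂(stdG K) := by
  have hm : 0 < Real.sqrt (Fintype.card K) :=
    Real.sqrt_pos.2 (by exact_mod_cast Fintype.card_pos)
  set q := Real.sqrt (Fintype.card K) with hq
  have hq2 : q * q = Fintype.card K := Real.mul_self_sqrt (Nat.cast_nonneg _)
  have h : ∀ g : K → ℝ, 3 / (2 * q) * (∑ k, g k ^ 2) - 1 / (2 * q ^ 3) * (∑ k, g k ^ 2) ^ 2 ≤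
      l2 g := by
    intro g
    have hl := l2_nonneg g
    rw [← l2_sq, ← sub_nonneg]
    have : l2 g - (3 / (2 * q) * l2 g ^ 2 - 1 / (2 * q ^ 3) * (l2 g ^ 2) ^ 2) =
        l2 g * (l2 g - q) ^ 2 * (l2 g + 2 * q) / (2 * q ^ 3) := by
      field_simp
      ring
    rw [this]
    positivity
  have hi1 : Integrable (fun g : K → ℝ => 3 / (2 * q) * ∑ k, g k ^ 2) (stdG K) :=
    integrable_sum_sq.const_mul _
  have hi2 : Integrable (fun g : K → ℝ => 1 / (2 * q ^ 3) * (∑ k, g k ^ 2) ^ 2) (stdG K) := by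
    refine Integrable.const_mul ?_ _
    simp only [sq (∑ k, _)]
    exact (expGrowth_sum_sq.mul expGrowth_sum_sq).integrable (by fun_prop)
  calc _ = ∫ g : K → ℝ, (3 / (2 * q) * (∑ k, g k ^ 2) -
          1 / (2 * q ^ 3) * (∑ k, g k ^ 2) ^ 2) ∂(stdG K) := by
        rw [integral_sub hi1 hi2, integral_const_mul, integral_const_mul, integral_sum_sq,
          integral_sum_sq_sq, ← hq2]
        field_simp
        ring
    _ ≤ _ := integral_mono (hi1.sub hi2) integrable_l2 h

end Moments

section Chevet

variable {I J M N : Type*} [Fintype I] [Fintype J]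

lemma le_softExt_one {β : ℝ} (hβ : 0 < β) (z : I × J → ℝ) (a : I × J) : z a ≤ softExt 1 β z := by
  have h1 := le_lse (fun j => β * z (a.1, j)) a.2
  have h2 := le_lse (fun i => 1 * lse fun j => β * z (i, j)) a.1
  simp only [one_mul] at h2
  simp only [softExt, one_mul]
  rw [← div_eq_inv_mul, le_div_iff₀ hβ]
  linarith

variable [Nonempty I] [Nonempty J] [Fintype M] [Fintype N]

lemma integrable_softExt_mulVec {M : Type*} [Fintype M] {s β : ℝ} (hs : |s| = 1) (hβ : 0 < β)
    (W : Matrix (I × J) M ℝ) :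
    Integrable (fun g => softExt s β (W.mulVec g)) (stdG M) := by
  obtain ⟨C, hC⟩ := abs_softExt_le (I := I) (J := J) hs hβ
  exact ((ExpGrowth.of_linear hC).comp_mulVec W).integrable
    ((continuous_softExt s β).comp (continuous_mulVec_const W))

lemma integral_lse_le_sqrt_card {β : ℝ} (hβ : 0 < β) {u : J → M → ℝ} (hu : ∀ j, ∑ k, u j k ^ 2 ≤ 1) :
    ∫ g, lse (fun j => β * ∑ k, u j k * g k) ∂(stdG M) ≤
      β * Real.sqrt (Fintype.card M) + Real.log (Fintype.card J) := by
  calc _ ≤ ∫ g, (β * l2 g + Real.log (Fintype.card J)) ∂(stdG M) := by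
        refine integral_mono (integrable_lse_linear β u)
          ((integrable_l2.const_mul β).add (integrable_const _)) fun g => lse_le fun j => ?_
        exact mul_le_mul_of_nonneg_left (sum_mul_le_l2 (hu j) g) hβ.le
    _ ≤ _ := by
        rw [integral_add (integrable_l2.const_mul β) (integrable_const _), integral_const_mul]
        have := mul_le_mul_of_nonneg_left (integral_l2_le (K := M)) hβ.le
        simpa using this

/-- Chevet's inequality: an integrable majorant of a bilinear Gaussian process. -/
theorem exists_chevet_majorant {x : I → N → ℝ} {u : J → M → ℝ} (hx : ∀ i, ∑ l, x i l ^ 2 = 1)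
    (hu : ∀ j, ∑ k, u j k ^ 2 ≤ 1) {ε : ℝ} (hε : 0 < ε) :
    ∃ Φ : (M × N → ℝ) → ℝ, Integrable Φ (stdG (M × N)) ∧
      ∫ g, Φ g ∂(stdG (M × N)) ≤ Real.sqrt (Fintype.card M) + Real.sqrt (Fintype.card N) + ε ∧
      ∀ i j g, |∑ p : M × N, u j p.1 * x i p.2 * g p| ≤ Φ g := by
  set u' : J × Bool → M → ℝ := fun j k => (if j.2 then 1 else -1) * u j.1 k with hu'
  have hu1 : ∀ j, ∑ k, u' j k ^ 2 ≤ 1 := by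
    rintro ⟨j, b⟩
    cases b <;> simpa [hu'] using hu j
  set L := Real.log (Fintype.card I) + Real.log (Fintype.card (J × Bool)) with hL
  have hL0 : 0 ≤ L := add_nonneg (log_card_nonneg _) (log_card_nonneg _)
  set β := (L + 1) / ε with hβ'
  have hβ : 0 < β := by positivity
  refine ⟨fun g => softExt 1 β ((bilinMatrix x u').mulVec g), integrable_softExt_mulVec (by simp) hβ _,
    ?_, fun i j g => abs_le'.2 ⟨?_, ?_⟩⟩
  · refine (integral_softExt_bilin_le (by simp) hβ hx hu1).trans ?_
    have h1 := integral_lse_le_sqrt_card hβ (u := x) fun i => (hx i).le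
    have h2 := integral_lse_le_sqrt_card hβ hu1
    simp only [one_mul]
    rw [← mul_add]
    refine (mul_le_mul_of_nonneg_left (add_le_add h1 h2) (inv_nonneg.2 hβ.le)).trans ?_
    have : β⁻¹ * (β * Real.sqrt (Fintype.card N) + Real.log (Fintype.card I) +
        (β * Real.sqrt (Fintype.card M) + Real.log (Fintype.card (J × Bool)))) =
        Real.sqrt (Fintype.card M) + Real.sqrt (Fintype.card N) + L / β := by
      rw [hL]
      field_simp
      ring
    rw [this]
    gcongr
    rw [div_le_iff₀ hβ, hβ']
    field_simp
    linarith
  · have := le_softExt_one hβ ((bilinMatrix x u').mulVec g) (i, (j, true))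
    simpa [bilinMatrix, hu', Matrix.mulVec, dotProduct] using this
  · have := le_softExt_one hβ ((bilinMatrix x u').mulVec g) (i, (j, false))
    simpa [bilinMatrix, hu', Matrix.mulVec, dotProduct] using this

/-- `x` is a combination of rank-one matrices with unit factors and total weight at most `c`. -/
def IsAtomicSum (c : ℝ) (x : M × N → ℝ) : Prop :=
  ∃ (σ : M → ℝ) (e : M → M → ℝ) (w : M → N → ℝ), (∀ k, 0 ≤ σ k) ∧ ∑ k, σ k ≤ c ∧
    (∀ k, ∑ i, e k i ^ 2 ≤ 1) ∧ (∀ k, ∑ j, w k j ^ 2 = 1) ∧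
    ∀ p, x p = ∑ k, σ k * (e k p.1 * w k p.2)

/-- The Gaussian width of a finite family of matrices of bounded nuclear norm. -/
theorem integral_lse_atomic_le [Nonempty M] {c : ℝ} (hc : 0 ≤ c) {x : I → M × N → ℝ}
    (hx : ∀ i, IsAtomicSum c (x i)) {s β : ℝ} (hs : |s| = 1) (hβ : 0 < β) :
    β⁻¹ * ∫ g, lse (fun i => s * β * ∑ p, x i p * g p) ∂(stdG (M × N)) ≤
      c * (Real.sqrt (Fintype.card M) + Real.sqrt (Fintype.card N)) +
        Real.log (Fintype.card I) / β := by
  choose σ e w hσ hσc he hw hxe using hx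
  refine le_of_forall_pos_le_add fun ε hε => ?_
  obtain ⟨Φ, hΦi, hΦ, hle⟩ := exists_chevet_majorant (x := fun q : I × M => w q.1 q.2)
    (u := fun q : I × M => e q.1 q.2) (fun q => hw _ _) (fun q => he _ _)
    (ε := ε / (c + 1)) (by positivity)
  have hΦ0 : ∀ g, 0 ≤ Φ g := by
    intro g
    obtain ⟨i⟩ := ‹Nonempty I›
    obtain ⟨k⟩ := ‹Nonempty M›
    exact (abs_nonneg _).trans (hle (i, k) (i, k) g)
  have hbound : ∀ i g, s * β * ∑ p, x i p * g p ≤ β * (c * Φ g) := by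
    intro i g
    have e1 : ∑ p, x i p * g p = ∑ k, σ i k * ∑ p : M × N, e i k p.1 * w i k p.2 * g p := by
      simp only [hxe, Finset.sum_mul, Finset.mul_sum]
      rw [Finset.sum_comm]
      exact Finset.sum_congr rfl fun k _ => Finset.sum_congr rfl fun p _ => by ring
    have e2 : |∑ p, x i p * g p| ≤ c * Φ g := by
      rw [e1]
      refine (Finset.abs_sum_le_sum_abs _ _).trans ?_
      calc _ ≤ ∑ k, σ i k * Φ g := by
            refine Finset.sum_le_sum fun k _ => ?_
            rw [abs_mul, abs_of_nonneg (hσ i k)]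
            exact mul_le_mul_of_nonneg_left (hle (i, k) (i, k) g) (hσ i k)
        _ ≤ c * Φ g := by
            rw [← Finset.sum_mul]
            exact mul_le_mul_of_nonneg_right (hσc i) (hΦ0 g)
    calc _ ≤ |s * β * ∑ p, x i p * g p| := le_abs_self _
      _ = β * |∑ p, x i p * g p| := by rw [abs_mul, abs_mul, hs, one_mul, abs_of_pos hβ]
      _ ≤ _ := mul_le_mul_of_nonneg_left e2 hβ.le
  have h_integ := integral_mono (integrable_lse_linear (s * β) x)
    (((hΦi.const_mul c).const_mul β).add (integrable_const (Real.log (Fintype.card I))))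
    fun g => lse_le fun i => hbound i g
  simp only [Pi.add_apply] at h_integ
  rw [integral_add ((hΦi.const_mul c).const_mul β) (integrable_const _), integral_const_mul,
    integral_const_mul, integral_const] at h_integ
  simp only [probReal_univ, smul_eq_mul, one_mul] at h_integ
  rw [← div_eq_inv_mul, div_le_iff₀ hβ]
  have h3 : c * ∫ g, Φ g ∂(stdG (M × N)) ≤
      c * (Real.sqrt (Fintype.card M) + Real.sqrt (Fintype.card N)) + ε := by
    refine (mul_le_mul_of_nonneg_left hΦ hc).trans ?_
    rw [mul_add]
    gcongr
    rw [← mul_div_assoc, div_le_iff₀ (by positivity)]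
    nlinarith
  refine h_integ.trans ?_
  have h4 := mul_le_mul_of_nonneg_left h3 hβ.le
  have : (c * (Real.sqrt (Fintype.card M) + Real.sqrt (Fintype.card N)) +
      Real.log (Fintype.card I) / β + ε) * β =
      β * (c * (Real.sqrt (Fintype.card M) + Real.sqrt (Fintype.card N)) + ε) +
        Real.log (Fintype.card I) := by
    field_simp
    ring
  rw [this]
  linarith

end Chevet

section TailBounds

variable {M N A B : Type*} [Fintype M] [Fintype N] [Fintype A] [Fintype B]

/-- The Gaussian linear map `g` applied to the vector `x`. -/
def gaussMap (g : M × N → ℝ) (x : N → ℝ) : M → ℝ := fun k => ∑ l, x l * g (k, l)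

lemma bilinMatrix_mulVec_apply {I J : Type*} (x : I → N → ℝ) (u : J → M → ℝ) (g : M × N → ℝ)
    (a : I × J) :
    (bilinMatrix x u).mulVec g a = ∑ k, u a.2 k * gaussMap g (x a.1) k := by
  simp only [bilinMatrix, Matrix.mulVec, dotProduct, Matrix.of_apply, Fintype.sum_prod_type,
    gaussMap, Finset.mul_sum, mul_assoc]

lemma exists_finite_net (M : Type*) [Fintype M] {δ : ℝ} (hδ : 0 < δ) :
    ∃ (J : Type) (_ : Fintype J) (_ : Nonempty J) (u : J → M → ℝ), (∀ j, ∑ k, u j k ^ 2 ≤ 1) ∧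
      ∀ h : M → ℝ, ∃ j, (1 - δ) * l2 h ≤ ∑ k, u j k * h k := by
  obtain ⟨t, hts, hfin, hcov⟩ :=
    (isCompact_closedBall (0 : EuclideanSpace ℝ M) 1).finite_cover_balls hδ
  have hl2 : ∀ v : EuclideanSpace ℝ M, ‖v‖ = l2 v := fun v => by
    simp [EuclideanSpace.norm_eq, l2]
  have hnear : ∀ v : EuclideanSpace ℝ M, ‖v‖ ≤ 1 → ∃ y ∈ t, ‖v - y‖ < δ := by
    intro v hv
    have := hcov (mem_closedBall_zero_iff.2 hv)
    simp only [Set.mem_iUnion, mem_ball_iff_norm, exists_prop] at this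
    exact this
  obtain ⟨y₀, hy₀, -⟩ := hnear 0 (by simp)
  have := hfin.to_subtype
  obtain ⟨n, ⟨e⟩⟩ := Finite.exists_equiv_fin t
  refine ⟨Fin n, inferInstance, ⟨e ⟨y₀, hy₀⟩⟩, fun j => ((e.symm j : t) : EuclideanSpace ℝ M),
    fun j => ?_, fun h => ?_⟩
  · have h1 := mem_closedBall_zero_iff.1 (hts (e.symm j).2)
    rw [hl2] at h1
    rw [← l2_sq]
    exact pow_le_one₀ (l2_nonneg _) h1
  · set H : EuclideanSpace ℝ M := WithLp.toLp 2 h with hH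
    have hHn : ‖H‖ = l2 h := hl2 H
    have hv : ‖(‖H‖⁻¹ • H)‖ ≤ 1 := by
      rw [norm_smul, norm_inv, norm_norm]
      exact inv_mul_le_one
    obtain ⟨y, hy, hyδ⟩ := hnear _ hv
    refine ⟨e ⟨y, hy⟩, ?_⟩
    have hin : inner ℝ y H = ∑ k, y k * h k := by
      simp [PiLp.inner_apply, hH, mul_comm]
    simp only [Equiv.symm_apply_apply]
    rw [← hin, ← hHn]
    have h1 : inner ℝ (‖H‖⁻¹ • H - y) H ≤ δ * ‖H‖ :=
      (real_inner_le_norm _ _).trans (by gcongr)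
    rw [inner_sub_left, real_inner_smul_left, real_inner_self_eq_norm_mul_norm] at h1
    have h2 : ‖H‖⁻¹ * (‖H‖ * ‖H‖) = ‖H‖ := by
      by_cases h0 : ‖H‖ = 0
      · simp [h0]
      · field_simp
    linarith

/-- Upper tail bound over finite families. -/
theorem measure_exists_finite_gt_le [Nonempty A] {I J : Type*} [Fintype I] [Fintype J]
    [Nonempty I] [Nonempty J] {c : ℝ} (hc : 0 ≤ c) {x : I → A × B → ℝ} {u : J → M → ℝ}
    (hx : ∀ i, ∑ l, x i l ^ 2 = 1) (hxc : ∀ i, IsAtomicSum c (x i))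
    (hu : ∀ j, ∑ k, u j k ^ 2 ≤ 1) {r ε : ℝ} (hr : 0 ≤ r) (hε : 0 < ε) :
    (stdG (M × (A × B))) {g | ∃ i j, Real.sqrt (Fintype.card M) +
        c * (Real.sqrt (Fintype.card A) + Real.sqrt (Fintype.card B)) + ε + r <
          ∑ k, u j k * gaussMap g (x i) k} ≤ ENNReal.ofReal (Real.exp (-r ^ 2 / 2)) := by
  set L := Real.log (Fintype.card I) + Real.log (Fintype.card J) with hL
  have hL0 : 0 ≤ L := add_nonneg (log_card_nonneg _) (log_card_nonneg _)
  set β := (L + 1) / ε with hβ'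
  have hβ : 0 < β := by positivity
  have hLβ : L / β ≤ ε := by
    rw [div_le_iff₀ hβ, hβ']
    field_simp
    linarith
  refine (measure_mono ?_).trans
    (measure_softExt_bilin_ge_le (s := 1) (by simp) hβ hx hu hr)
  rintro g ⟨i, j, hij⟩
  have h1 := le_softExt_one hβ ((bilinMatrix x u).mulVec g) (i, j)
  rw [bilinMatrix_mulVec_apply] at h1
  have h2 := integral_softExt_bilin_le (s := 1) (by simp) hβ hx hu
  have h3 := integral_lse_atomic_le (s := 1) hc hxc (by simp) hβ
  have h4 : β⁻¹ * ∫ g, lse (fun j => β * ∑ k, u j k * g k) ∂(stdG M) ≤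
      Real.sqrt (Fintype.card M) + Real.log (Fintype.card J) / β := by
    rw [← div_eq_inv_mul, div_le_iff₀ hβ, add_mul, div_mul_cancel₀ _ hβ.ne', mul_comm _ β]
    exact integral_lse_le_sqrt_card hβ hu
  rw [hL, add_div] at hLβ
  simp only [Set.mem_ofPred_eq]
  linarith

/-- Lower tail bound over a finite family. -/
theorem measure_exists_finite_lt_le [Nonempty M] [Nonempty A] {I : Type*} [Fintype I]
    [Nonempty I] {c : ℝ} (hc : 0 ≤ c) {x : I → A × B → ℝ}
    (hx : ∀ i, ∑ l, x i l ^ 2 = 1) (hxc : ∀ i, IsAtomicSum c (x i))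
    {r ε : ℝ} (hr : 0 ≤ r) (hε : 0 < ε) :
    (stdG (M × (A × B))) {g | ∃ i, l2 (gaussMap g (x i)) <
        Real.sqrt (Fintype.card M) - 1 / Real.sqrt (Fintype.card M) -
        c * (Real.sqrt (Fintype.card A) + Real.sqrt (Fintype.card B)) - ε - r} ≤
          ENNReal.ofReal (Real.exp (-r ^ 2 / 2)) := by
  set q := Real.sqrt (Fintype.card M) with hq
  have hq0 : 0 ≤ q := Real.sqrt_nonneg _
  set δ := ε / (2 * (q + 1)) with hδ'
  have hδ : 0 < δ := by positivity
  obtain ⟨J, _, _, u, hu, hnet⟩ := exists_finite_net M hδ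
  set L := Real.log (Fintype.card I) + Real.log (Fintype.card J) with hL
  have hL0 : 0 ≤ L := add_nonneg (log_card_nonneg _) (log_card_nonneg _)
  set β := 2 * (L + 1) / ε with hβ'
  have hβ : 0 < β := by positivity
  have hLβ : L / β ≤ ε / 2 := by
    rw [div_le_iff₀ hβ, hβ']
    field_simp
    linarith
  refine (measure_mono ?_).trans
    (measure_softExt_bilin_ge_le (s := -1) (by simp) hβ hx hu hr)
  rintro g ⟨i, hi⟩
  have h1 : -l2 (gaussMap g (x i)) - Real.log (Fintype.card J) / β ≤
      softExt (-1) β ((bilinMatrix x u).mulVec g) := by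
    have ha := le_lse (fun i => -1 * lse fun j => β * (bilinMatrix x u).mulVec g (i, j)) i
    have hb : lse (fun j => β * (bilinMatrix x u).mulVec g (i, j)) ≤
        β * l2 (gaussMap g (x i)) + Real.log (Fintype.card J) := lse_le fun j => by
      rw [bilinMatrix_mulVec_apply]
      exact mul_le_mul_of_nonneg_left (sum_mul_le_l2 (hu j) _) hβ.le
    rw [softExt, ← div_eq_inv_mul, le_div_iff₀ hβ, sub_mul, div_mul_cancel₀ _ hβ.ne']
    linarith
  have h2 := integral_softExt_bilin_le (s := -1) (by simp) hβ hx hu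
  have h3 := integral_lse_atomic_le (s := -1) hc hxc (by simp) hβ
  have h4 : (1 - δ) * ∫ g, l2 g ∂(stdG M) ≤
      β⁻¹ * ∫ g, lse (fun j => β * ∑ k, u j k * g k) ∂(stdG M) := by
    rw [← integral_const_mul, ← integral_const_mul]
    refine integral_mono (integrable_l2.const_mul _) ((integrable_lse_linear β u).const_mul _)
      fun h => ?_
    obtain ⟨j, hj⟩ := hnet h
    have := le_lse (fun j => β * ∑ k, u j k * h k) j
    simp only at this ⊢
    rw [← div_eq_inv_mul, le_div_iff₀ hβ]
    nlinarith
  have h5 := integral_l2_le (K := M)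
  have h6 := le_integral_l2 (K := M)
  have h7 : δ * ∫ g, l2 g ∂(stdG M) ≤ ε / 2 := by
    refine (mul_le_mul_of_nonneg_left h5 hδ.le).trans ?_
    rw [← hq, hδ', div_mul_eq_mul_div, div_le_iff₀ (by positivity)]
    nlinarith
  rw [hL, add_div] at hLβ
  rw [← hq] at h6
  simp only [Set.mem_ofPred_eq]
  linarith

lemma measure_exists_le_of_finite {Ω α : Type*} [MeasurableSpace Ω] (μ : Measure Ω)
    [TopologicalSpace α] [SecondCountableTopology α] {S : Set α} (hS : S.Nonempty)
    {E : α → Set Ω} (hE : ∀ ω, IsOpen {a | ω ∈ E a}) {b : ENNReal}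
    (h : ∀ (n : ℕ) (y : Fin (n + 1) → α), (∀ i, y i ∈ S) → μ {ω | ∃ i, ω ∈ E (y i)} ≤ b) :
    μ {ω | ∃ a ∈ S, ω ∈ E a} ≤ b := by
  have : Nonempty S := hS.to_subtype
  set y : ℕ → S := TopologicalSpace.denseSeq S with hy
  have hsub : {ω | ∃ a ∈ S, ω ∈ E a} ⊆ ⋃ n : ℕ, {ω | ∃ i : Fin (n + 1), ω ∈ E (y i)} := by
    rintro ω ⟨a, ha, hω⟩
    obtain ⟨-, hz, ⟨n, rfl⟩⟩ := (TopologicalSpace.denseRange_denseSeq S).inter_open_nonempty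
      _ ((hE ω).preimage continuous_subtype_val) ⟨⟨a, ha⟩, hω⟩
    exact Set.mem_iUnion.2 ⟨n, Fin.last n, by simpa using hz⟩
  refine (measure_mono hsub).trans ?_
  rw [Monotone.measure_iUnion]
  · exact iSup_le fun n => h n _ fun i => (y i).2
  · rintro n n' hn ω ⟨i, hi⟩
    exact ⟨Fin.castLE (by lia) i, by simpa using hi⟩

lemma continuous_gaussMap {M : Type*} (g : M × N → ℝ) : Continuous (gaussMap g) := by
  unfold gaussMap
  fun_prop

/-- The matrices of unit Frobenius norm whose nuclear norm is at most `c`. -/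
def atomicSphere (A B : Type*) [Fintype A] [Fintype B] (c : ℝ) : Set (A × B → ℝ) :=
  {x | ∑ l, x l ^ 2 = 1 ∧ IsAtomicSum c x}

theorem measure_exists_lt_le [Nonempty M] [Nonempty A] {c : ℝ} (hc : 0 ≤ c)
    {r ε : ℝ} (hr : 0 ≤ r) (hε : 0 < ε) :
    (stdG (M × (A × B))) {g | ∃ x ∈ atomicSphere A B c, l2 (gaussMap g x) <
        Real.sqrt (Fintype.card M) - 1 / Real.sqrt (Fintype.card M) -
        c * (Real.sqrt (Fintype.card A) + Real.sqrt (Fintype.card B)) - ε - r} ≤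
          ENNReal.ofReal (Real.exp (-r ^ 2 / 2)) := by
  rcases (atomicSphere A B c).eq_empty_or_nonempty with hS | hS
  · simp [hS]
  refine measure_exists_le_of_finite _ hS (E := fun x => {g | l2 (gaussMap g x) < _})
    (fun g => ?_) fun n y hy => ?_
  · exact isOpen_lt (continuous_l2.comp (continuous_gaussMap g)) continuous_const
  · exact measure_exists_finite_lt_le hc (fun i => (hy i).1) (fun i => (hy i).2) hr hε

theorem measure_exists_gt_le [Nonempty A] {c : ℝ} (hc : 0 ≤ c)
    {r ε : ℝ} (hr : 0 ≤ r) (hε : 0 < ε) :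
    (stdG (M × (A × B))) {g | ∃ x ∈ atomicSphere A B c, Real.sqrt (Fintype.card M) +
        c * (Real.sqrt (Fintype.card A) + Real.sqrt (Fintype.card B)) + ε + r <
          l2 (gaussMap g x)} ≤ ENNReal.ofReal (Real.exp (-r ^ 2 / 2)) := by
  set θ := Real.sqrt (Fintype.card M) +
        c * (Real.sqrt (Fintype.card A) + Real.sqrt (Fintype.card B)) + ε + r with hθ
  have hθ0 : 0 < θ := by positivity
  rcases (atomicSphere A B c).eq_empty_or_nonempty with hS | hS
  · simp [hS]
  have hU : ({u : M → ℝ | ∑ k, u k ^ 2 ≤ 1}).Nonempty := ⟨0, by simp⟩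
  refine (measure_mono ?_).trans (measure_exists_le_of_finite (stdG (M × (A × B))) (hS.prod hU)
    (E := fun p => {g | θ < ∑ k, p.2 k * gaussMap g p.1 k}) (fun g => ?_) fun n y hy => ?_)
  · rintro g ⟨x, hx, hlt⟩
    have hpos : 0 < l2 (gaussMap g x) := hθ0.trans hlt
    have hsq := l2_sq (gaussMap g x)
    refine ⟨(x, fun k => gaussMap g x k / l2 (gaussMap g x)), ⟨hx, ?_⟩, ?_⟩
    · simp only [Set.mem_ofPred_eq, div_pow, ← Finset.sum_div, ← hsq]
      exact (div_self (by positivity)).le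
    · have : ∑ k, gaussMap g x k / l2 (gaussMap g x) * gaussMap g x k = l2 (gaussMap g x) := by
        simp only [div_mul_eq_mul_div, ← Finset.sum_div, ← sq, ← hsq]
        field_simp
      simpa [this] using hlt
  · have hg : Continuous fun p : (A × B → ℝ) × (M → ℝ) => ∑ k, p.2 k * gaussMap g p.1 k := by
      unfold gaussMap
      fun_prop
    exact isOpen_lt continuous_const hg
  · refine (measure_mono ?_).trans (measure_exists_finite_gt_le hc (x := fun i => (y i).1)
      (u := fun i => (y i).2) (fun i => (hy i).1.1) (fun i => (hy i).1.2) (fun i => (hy i).2) hr hε)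
    rintro g ⟨i, hi⟩
    exact ⟨i, i, hi⟩

end TailBounds

section SingularValues

variable {n₁ n₂ : ℕ}

lemma singVals_nonneg (X : Matrix (Fin n₁) (Fin n₂) ℝ) (k : Fin n₁) : 0 ≤ singVals X k :=
  Real.sqrt_nonneg _

lemma frobNorm_pos {X : Matrix (Fin n₁) (Fin n₂) ℝ} (hX : X ≠ 0) : 0 < frobNorm X := by
  have hnn : ∀ i, 0 ≤ ∑ j, X i j ^ 2 := fun i => Finset.sum_nonneg fun j _ => sq_nonneg _
  refine Real.sqrt_pos.2 ((Finset.sum_nonneg fun i _ => hnn i).lt_of_ne' fun h => hX ?_)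
  ext i j
  have h1 := (Finset.sum_eq_zero_iff_of_nonneg fun i _ => hnn i).1 h i (Finset.mem_univ i)
  have h2 := (Finset.sum_eq_zero_iff_of_nonneg fun j _ => sq_nonneg (X i j)).1 h1 j
    (Finset.mem_univ j)
  simpa using h2

/-- The singular value decomposition. -/
theorem exists_singular_value_decomposition [NeZero n₂] (X : Matrix (Fin n₁) (Fin n₂) ℝ) :
    ∃ (e : Fin n₁ → Fin n₁ → ℝ) (w : Fin n₁ → Fin n₂ → ℝ), (∀ k, ∑ i, e k i ^ 2 = 1) ∧
      (∀ k, ∑ j, w k j ^ 2 = 1) ∧ ∀ i j, X i j = ∑ k, singVals X k * (e k i * w k j) := by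
  set hH := Matrix.isHermitian_mul_conjTranspose_self X with hHdef
  set b := hH.eigenvectorBasis with hb
  set v : Fin n₁ → Fin n₂ → ℝ := fun k => X.transpose.mulVec (b k) with hv
  have hunit : ∀ k, ∑ i, b k i ^ 2 = 1 := by
    intro k
    have := b.orthonormal.1 k
    rw [EuclideanSpace.norm_eq, Real.sqrt_eq_one] at this
    simpa using this
  have heig : ∀ k, ∑ j, v k j ^ 2 = hH.eigenvalues k := by
    intro k
    have h1 : X.mulVec (v k) = hH.eigenvalues k • ⇑(b k) := by
      rw [← hH.mulVec_eigenvectorBasis k, ← Matrix.mulVec_mulVec]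
      rfl
    have h2 : ∑ j, v k j ^ 2 = dotProduct (⇑(b k)) (X.mulVec (v k)) := by
      rw [Matrix.dotProduct_mulVec, ← Matrix.mulVec_transpose]
      simp [dotProduct, sq, hv]
    rw [h2, h1, dotProduct_smul]
    have : dotProduct (⇑(b k)) (⇑(b k)) = 1 := by
      rw [← hunit k]
      simp [dotProduct, sq]
    rw [this, smul_eq_mul, mul_one]
  have hσ : ∀ k, singVals X k ^ 2 = ∑ j, v k j ^ 2 := by
    intro k
    rw [heig, singVals, Real.sq_sqrt]
    rw [← heig]
    exact Finset.sum_nonneg fun j _ => sq_nonneg _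
  have hexp : ∀ i j, X i j = ∑ k, b k i * v k j := by
    intro i j
    have h1 := congrArg (fun y : EuclideanSpace ℝ (Fin n₁) => y i)
      (b.sum_repr (WithLp.toLp 2 fun i => X i j))
    simp only [b.repr_apply_apply, PiLp.inner_apply] at h1
    simp at h1
    rw [← h1]
    refine Finset.sum_congr rfl fun k _ => ?_
    rw [mul_comm]
    simp [hv, Matrix.mulVec, dotProduct]
  refine ⟨fun k => b k, fun k => if singVals X k = 0 then Pi.single 0 1 else
    fun j => v k j / singVals X k, hunit, fun k => ?_, fun i j => ?_⟩
  · dsimp only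
    split_ifs with h
    · simp [Pi.single_apply]
    · simp only [div_pow, ← Finset.sum_div, ← hσ]
      exact div_self (pow_ne_zero 2 h)
  · rw [hexp]
    refine Finset.sum_congr rfl fun k _ => ?_
    dsimp only
    split_ifs with h
    · have h0 := hσ k
      rw [h, zero_pow two_ne_zero, eq_comm,
        Finset.sum_eq_zero_iff_of_nonneg fun j _ => sq_nonneg (v k j)] at h0
      have h1 : v k j = 0 := by simpa using h0 j (Finset.mem_univ j)
      rw [h, h1]
      ring
    · field_simp

lemma sq_frobNorm (X : Matrix (Fin n₁) (Fin n₂) ℝ) : frobNorm X ^ 2 = ∑ i, ∑ j, X i j ^ 2 :=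
  Real.sq_sqrt (Finset.sum_nonneg fun _ _ => Finset.sum_nonneg fun _ _ => sq_nonneg _)

lemma normalize_mem_atomicSphere {X : Matrix (Fin n₁) (Fin n₂) ℝ} (hX : X ≠ 0) {τ : ℝ}
    (hτ : lstarRank X ≤ τ) :
    (fun p => X p.1 p.2 / frobNorm X) ∈ atomicSphere (Fin n₁) (Fin n₂) (Real.sqrt τ) := by
  have hF := frobNorm_pos hX
  have : NeZero n₂ := ⟨by
    rintro rfl
    exact hX (by ext i j; exact j.elim0)⟩
  obtain ⟨e, w, he, hw, hXe⟩ := exists_singular_value_decomposition X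
  refine ⟨?_, fun k => singVals X k / frobNorm X, e, w, fun k => div_nonneg (singVals_nonneg X k) hF.le,
    ?_, fun k => (he k).le, hw, fun p => ?_⟩
  · simp only [Fintype.sum_prod_type, div_pow, ← Finset.sum_div, ← sq_frobNorm]
    exact div_self (by positivity)
  · rw [← Finset.sum_div]
    refine Real.le_sqrt_of_sq_le ?_
    rw [div_pow]
    exact hτ
  · change X p.1 p.2 / frobNorm X = _
    rw [hXe p.1 p.2, Finset.sum_div]
    exact Finset.sum_congr rfl fun k _ => by ring

lemma exists_lstarRank_le_one [NeZero n₁] [NeZero n₂] :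
    ∃ X : Matrix (Fin n₁) (Fin n₂) ℝ, X ≠ 0 ∧ lstarRank X ≤ 1 := by
  set X : Matrix (Fin n₁) (Fin n₂) ℝ := Matrix.single 0 0 1 with hX
  have hP : X * X.conjTranspose = Matrix.single 0 0 1 := by
    simp [hX]
  have hidem : (X * X.conjTranspose) * (X * X.conjTranspose) = X * X.conjTranspose := by
    rw [hP]
    simp
  set hH := Matrix.isHermitian_mul_conjTranspose_self X with hHdef
  have hev : ∀ k, singVals X k = hH.eigenvalues k := by
    intro k
    have h1 := hH.mulVec_eigenvectorBasis k
    have h2 : hH.eigenvalues k * hH.eigenvalues k = hH.eigenvalues k := by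
      have h3 := congrArg ((X * X.conjTranspose).mulVec) h1
      rw [Matrix.mulVec_mulVec, hidem, Matrix.mulVec_smul, h1, smul_smul] at h3
      by_contra hne
      have h4 : (hH.eigenvalues k * hH.eigenvalues k - hH.eigenvalues k) •
          ⇑(hH.eigenvectorBasis k) = 0 := by
        rw [sub_smul, ← h3, sub_self]
      have h5 := (smul_eq_zero.1 h4).resolve_left (sub_ne_zero.2 hne)
      exact hH.eigenvectorBasis.orthonormal.ne_zero k (by ext i; exact congrFun h5 i)
    have h6 : 0 ≤ hH.eigenvalues k := by nlinarith [mul_self_nonneg (hH.eigenvalues k)]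
    have h7 : singVals X k = Real.sqrt (hH.eigenvalues k) := rfl
    rw [h7]
    conv_lhs => rw [← h2]
    exact Real.sqrt_mul_self h6
  have hnuc : nuclearNorm X = 1 := by
    have htr := hH.trace_eq_sum_eigenvalues
    simp only [nuclearNorm, hev]
    have htr1 : (X * X.conjTranspose).trace = 1 := by
      rw [hP]
      simp
    rw [htr1] at htr
    simpa using htr.symm
  have hfrob : frobNorm X ^ 2 = 1 := by
    rw [sq_frobNorm]
    rw [Finset.sum_eq_single 0, Finset.sum_eq_single 0]
    · simp [hX]
    · intro j _ hj
      simp [hX, hj.symm]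
    · simp
    · intro i _ hi
      simp [hX, hi.symm]
    · simp
  refine ⟨X, fun h => ?_, ?_⟩
  · have := congrFun (congrFun h 0) 0
    simp [hX] at this
  · rw [lstarRank, hnuc, hfrob]
    norm_num

end SingularValues

lemma vnorm_scaledOp_div {m n₁ n₂ : ℕ} (ω : (Fin m × Fin n₁ × Fin n₂) → ℝ)
    {X : Matrix (Fin n₁) (Fin n₂) ℝ} (hX : X ≠ 0) :
    vnorm (scaledOp ω X) / frobNorm X =
      l2 (gaussMap ω fun p : Fin n₁ × Fin n₂ => X p.1 p.2 / frobNorm X) / Real.sqrt m := by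
  have hF := frobNorm_pos hX
  have h : ∀ k, scaledOp ω X k = (frobNorm X / Real.sqrt m) *
      gaussMap ω (fun p : Fin n₁ × Fin n₂ => X p.1 p.2 / frobNorm X) k := by
    intro k
    have h1 : opOf (ensembleMatrices ω) X k =
        frobNorm X * gaussMap ω (fun p : Fin n₁ × Fin n₂ => X p.1 p.2 / frobNorm X) k := by
      simp only [opOf, matInner, Matrix.trace, Matrix.diag_apply, Matrix.mul_apply,
        Matrix.transpose_apply, ensembleMatrices, Matrix.of_apply, gaussMap,
        Fintype.sum_prod_type, Finset.mul_sum]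
      rw [Finset.sum_comm]
      refine Finset.sum_congr rfl fun i _ => Finset.sum_congr rfl fun j _ => ?_
      field_simp
    rw [scaledOp, h1]
    ring
  simp only [vnorm, h, mul_pow, ← Finset.mul_sum]
  rw [Real.sqrt_mul (sq_nonneg _), Real.sqrt_sq (by positivity), ← l2]
  field_simp

/-- Gaussian concentration for the ℓ*-constrained singular values. -/
theorem stmt14 {m n₁ n₂ : ℕ} (hn : n₁ ≤ n₂) (τ : ℝ) (hτ1 : 1 ≤ τ) (hτ2 : τ ≤ (n₁ : ℝ))
    (t : ℝ) (ht : 0 < t) :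
    gaussianEnsemble m n₁ n₂
        {ω | 1 + 3 * Real.sqrt (τ * n₂ / m) + t < cmsvMax (scaledOp ω) τ} ≤
      ENNReal.ofReal (Real.exp (-(m : ℝ) * t ^ 2 / 2)) ∧
    gaussianEnsemble m n₁ n₂
        {ω | cmsvMin (scaledOp ω) τ < 1 - 3 * Real.sqrt (τ * n₂ / m) - t} ≤
      ENNReal.ofReal (Real.exp (-(m : ℝ) * t ^ 2 / 2)) := by
  have hμ : gaussianEnsemble m n₁ n₂ = stdG (Fin m × Fin n₁ × Fin n₂) := rfl
  rw [hμ]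
  rcases Nat.eq_zero_or_pos m with rfl | hm
  · simp [prob_le_one]
  have hn₁ : (1 : ℝ) ≤ n₁ := hτ1.trans hτ2
  have hn₁' : 0 < n₁ := by
    have : (0 : ℝ) < n₁ := by linarith
    exact_mod_cast this
  have : NeZero n₁ := ⟨hn₁'.ne'⟩
  have : NeZero n₂ := ⟨by lia⟩
  have : NeZero m := ⟨hm.ne'⟩
  have hnR : (n₁ : ℝ) ≤ n₂ := by exact_mod_cast hn
  set q := Real.sqrt m with hq
  have hm1 : (1 : ℝ) ≤ m := by exact_mod_cast hm
  have hq1 : 1 ≤ q := Real.one_le_sqrt.2 hm1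
  have hq2 : q ^ 2 = m := Real.sq_sqrt (by positivity)
  set v := Real.sqrt (τ * n₂) with hv
  have hv1 : 1 ≤ v := Real.one_le_sqrt.2 (by nlinarith)
  have hdiv : Real.sqrt (τ * n₂ / m) = v / q := Real.sqrt_div (by positivity) _
  have hwidth : Real.sqrt τ * (Real.sqrt n₁ + Real.sqrt n₂) ≤ 2 * v := by
    have h1 : Real.sqrt n₁ ≤ Real.sqrt n₂ := Real.sqrt_le_sqrt hnR
    rw [hv, Real.sqrt_mul (by positivity)]
    nlinarith [Real.sqrt_nonneg τ]
  have hr : 0 ≤ q * t := by positivity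
  have hexp : -(m : ℝ) * t ^ 2 / 2 = -(q * t) ^ 2 / 2 := by
    rw [mul_pow, hq2]
    ring
  rw [hdiv, hexp]
  constructor
  · refine (measure_mono ?_).trans (measure_exists_gt_le (M := Fin m) (A := Fin n₁)
      (B := Fin n₂) (Real.sqrt_nonneg τ) hr (zero_lt_one.trans_le hv1))
    intro ω hω
    simp only [Set.mem_ofPred_eq, Fintype.card_fin] at hω ⊢
    have hne : {c | ∃ X : Matrix (Fin n₁) (Fin n₂) ℝ, X ≠ 0 ∧ lstarRank X ≤ τ ∧
        c = vnorm (scaledOp ω X) / frobNorm X}.Nonempty := by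
      obtain ⟨X, hX0, hX⟩ := exists_lstarRank_le_one (n₁ := n₁) (n₂ := n₂)
      exact ⟨_, X, hX0, hX.trans hτ1, rfl⟩
    obtain ⟨_, ⟨X, hX0, hX, rfl⟩, hlt⟩ := exists_lt_of_lt_csSup hne hω
    refine ⟨_, normalize_mem_atomicSphere hX0 hX, ?_⟩
    rw [vnorm_scaledOp_div ω hX0, lt_div_iff₀ (by positivity)] at hlt
    have e : (1 + 3 * (v / q) + t) * q = q + 3 * v + q * t := by
      field_simp
    rw [← hq] at hlt ⊢
    rw [e] at hlt
    linarith
  · by_cases hm2 : m = 1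
    · have hempty : {ω : (Fin m × Fin n₁ × Fin n₂) → ℝ |
          cmsvMin (scaledOp ω) τ < 1 - 3 * (v / q) - t} = ∅ := by
        refine Set.eq_empty_of_forall_notMem fun ω hω => ?_
        have h0 : 0 ≤ cmsvMin (scaledOp ω) τ := by
          refine Real.sInf_nonneg ?_
          rintro _ ⟨X, -, -, rfl⟩
          exact div_nonneg (Real.sqrt_nonneg _) (Real.sqrt_nonneg _)
        have hq' : q = 1 := by simp [hq, hm2]
        simp only [Set.mem_ofPred_eq, hq', div_one] at hω
        linarith
      rw [hempty]
      simp
    have hqgt : 1 < q := by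
      refine Real.lt_sqrt_of_sq_lt ?_
      have : 1 < m := by lia
      simpa using this
    have hε : 0 < 1 - 1 / q := by
      rw [sub_pos, div_lt_one (by positivity)]
      exact hqgt
    refine (measure_mono ?_).trans (measure_exists_lt_le (M := Fin m) (A := Fin n₁)
      (B := Fin n₂) (Real.sqrt_nonneg τ) hr hε)
    intro ω hω
    simp only [Set.mem_ofPred_eq, Fintype.card_fin] at hω ⊢
    have hne : {c | ∃ X : Matrix (Fin n₁) (Fin n₂) ℝ, X ≠ 0 ∧ lstarRank X ≤ τ ∧
        c = vnorm (scaledOp ω X) / frobNorm X}.Nonempty := by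
      obtain ⟨X, hX0, hX⟩ := exists_lstarRank_le_one (n₁ := n₁) (n₂ := n₂)
      exact ⟨_, X, hX0, hX.trans hτ1, rfl⟩
    obtain ⟨_, ⟨X, hX0, hX, rfl⟩, hlt⟩ := exists_lt_of_csInf_lt hne hω
    refine ⟨_, normalize_mem_atomicSphere hX0 hX, ?_⟩
    rw [vnorm_scaledOp_div ω hX0, div_lt_iff₀ (by positivity)] at hlt
    have e : (1 - 3 * (v / q) - t) * q = q - 3 * v - q * t := by
      field_simp
    rw [← hq] at hlt ⊢
    rw [e] at hlt
    linarith

end
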